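/- arXiv:1901.03458 — 12 statements merged into one kernel-verified Lean document; each statement's English description precedes it below -/
import Mathlib

section
/- Let X be a topological space, h : X → ℝ a continuous function, and A ⊆ X a closed subset. Assume that for every c ∈ ℝ the level set h⁻¹({c}) is preconnected, and that for every c ∈ ℝ the set h⁻¹({c}) ∩ ∂A is preconnected, where ∂A denotes the frontier of A. Then for every c ∈ ℝ the set h⁻¹({c}) ∩ A is preconnected. -/
/-!
Let `S` be preconnected and covered by closed sets `A` and `B` with `S ∩ A ∩ B` preconnected. In a
separation of `S ∩ A` by closed sets, `S ∩ A ∩ B` would lie in one of the two pieces, and gluing `B`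
to that piece would separate `S`. Hence `S ∩ A` is preconnected. For `A` closed and
`B = closure Aᶜ` the intersection `A ∩ B` is `frontier A`.
-/

open Set

section

variable {X : Type*} [TopologicalSpace X] {S A B : Set X}

theorem inter_subset_or_subset_of_inter_inter_subset {u v : Set X} (hS : IsPreconnected S)
    (hA : IsClosed A) (hB : IsClosed B) (hSAB : S ⊆ A ∪ B) (hu : IsClosed u) (hv : IsClosed v)
    (hSAuv : S ∩ A ⊆ u ∪ v) (hdisj : S ∩ A ∩ (u ∩ v) = ∅) (hSABu : S ∩ A ∩ B ⊆ u) :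
    S ∩ A ⊆ u ∨ S ∩ A ⊆ v := by
  have hcover : S ⊆ (u ∪ B) ∪ (A ∩ v) := by
    intro x hxS
    rcases hSAB hxS with hxA | hxB
    · exact (hSAuv ⟨hxS, hxA⟩).imp Or.inl fun hxv => ⟨hxA, hxv⟩
    · exact Or.inl (Or.inr hxB)
  have hsep : S ∩ ((u ∪ B) ∩ (A ∩ v)) = ∅ := by
    refine subset_empty_iff.mp ?_
    rintro x ⟨hxS, hxu | hxB, hxA, hxv⟩
    · exact hdisj.subset ⟨⟨hxS, hxA⟩, hxu, hxv⟩
    · exact hdisj.subset ⟨⟨hxS, hxA⟩, hSABu ⟨⟨hxS, hxA⟩, hxB⟩, hxv⟩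
  rcases isPreconnected_iff_subset_of_disjoint_closed.mp hS (u ∪ B) (A ∩ v)
      (hu.union hB) (hA.inter hv) hcover hsep with hSuB | hSAv
  · exact Or.inl fun x hx => (hSuB hx.1).elim id fun hxB => hSABu ⟨hx, hxB⟩
  · exact Or.inr fun x hx => (hSAv hx.1).2

theorem isPreconnected_inter_of_isClosed_of_subset_union (hS : IsPreconnected S)
    (hA : IsClosed A) (hB : IsClosed B) (hSAB : S ⊆ A ∪ B) (hinter : IsPreconnected (S ∩ A ∩ B)) :
    IsPreconnected (S ∩ A) := by
  refine isPreconnected_iff_subset_of_disjoint_closed.mpr fun u v hu hv huv hdisj => ?_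
  have hdisjB : S ∩ A ∩ B ∩ (u ∩ v) = ∅ :=
    subset_empty_iff.mp <| (inter_subset_inter_left _ inter_subset_left).trans hdisj.subset
  rcases isPreconnected_iff_subset_of_disjoint_closed.mp hinter u v hu hv
      (inter_subset_left.trans huv) hdisjB with hBu | hBv
  · exact inter_subset_or_subset_of_inter_inter_subset hS hA hB hSAB hu hv huv hdisj hBu
  · rw [union_comm] at huv
    rw [inter_comm u v] at hdisj
    exact (inter_subset_or_subset_of_inter_inter_subset hS hA hB hSAB hv hu huv hdisj hBv).symm

theorem level_sets_preconnected_on_closed_subset_general (hS : IsPreconnected S)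
    (hfrontier : IsPreconnected (S ∩ frontier A)) : IsPreconnected (S ∩ closure A) := by
  have hcover : S ⊆ closure A ∪ closure Aᶜ := fun x _ =>
    (em (x ∈ A)).imp (fun hx => subset_closure hx) fun hx => subset_closure hx
  rw [frontier_eq_closure_inter_closure, ← inter_assoc] at hfrontier
  exact isPreconnected_inter_of_isClosed_of_subset_union hS isClosed_closure isClosed_closure
    hcover hfrontier

end

/-- Part (1) of the point-set topology lemma: if a continuous real-valued function has
preconnected level sets, and its level sets intersected with the frontier of a closed set `A`
are preconnected, then its level sets intersected with `A` are preconnected. -/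
theorem level_sets_preconnected_on_closed_subset
    {X : Type*} [TopologicalSpace X] (h : X → ℝ) (hcont : Continuous h)
    (A : Set X) (hA : IsClosed A)
    (hlev : ∀ c : ℝ, IsPreconnected (h ⁻¹' {c}))
    (hbd : ∀ c : ℝ, IsPreconnected (h ⁻¹' {c} ∩ frontier A)) :
    ∀ c : ℝ, IsPreconnected (h ⁻¹' {c} ∩ A) := fun c => by
  simpa only [hA.closure_eq] using
    level_sets_preconnected_on_closed_subset_general (hlev c) (hbd c)
end

section
/- Let μ₁, μ₂, μ₃ be real numbers, each different from 1, satisfying the fixed point formula 1/(1−μ₁) + 1/(1−μ₂) + 1/(1−μ₃) = 1. If not all three of μ₁, μ₂, μ₃ are negative (i.e., at most two of them are < 0), then there exists i ∈ {1,2,3} with |μᵢ| < 1. -/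
/-!
If no multiplier were attracting, each would lie in `(-∞, -1] ∪ (1, ∞)`. The map `x ↦ 1 / (1 - x)`
sends `(-∞, -1]` into `(0, 1/2]` and `(1, ∞)` into `(-∞, 0)`. Hence two negative multipliers
contribute at most `1` to the fixed point formula, and any multiplier in `(1, ∞)` makes the sum
strictly smaller than `1`.
-/

open Finset

section LinearOrderedField

variable {K : Type*} [Field K] [LinearOrder K] [IsStrictOrderedRing K]

theorem one_div_one_sub_le_half_of_le_neg_one {x : K} (hx : x ≤ -1) : 1 / (1 - x) ≤ 1 / 2 :=
  one_div_le_one_div_of_le two_pos (by linarith)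

theorem one_div_one_sub_neg_of_one_lt {x : K} (hx : 1 < x) : 1 / (1 - x) < 0 :=
  one_div_neg.2 (sub_neg.2 hx)

variable {ι : Type*} {s : Finset ι} {μ : ι → K}

theorem sum_one_div_one_sub_lt_card_neg_div_two (hne : ∀ i ∈ s, μ i ≠ 1)
    (habs : ∀ i ∈ s, 1 ≤ |μ i|) (hnonneg : ∃ i ∈ s, 0 ≤ μ i) :
    ∑ i ∈ s, 1 / (1 - μ i) < #{i ∈ s | μ i < 0} / 2 := by
  have neg_part : ∑ i ∈ s with μ i < 0, 1 / (1 - μ i) ≤ #{i ∈ s | μ i < 0} • (1 / 2 : K) := by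
    refine sum_le_card_nsmul _ _ _ fun i hi ↦ one_div_one_sub_le_half_of_le_neg_one ?_
    obtain ⟨his, hi_neg⟩ := mem_filter.1 hi
    exact le_neg.1 (abs_of_neg hi_neg ▸ habs i his)
  have nonneg_part : ∑ i ∈ s with ¬ μ i < 0, 1 / (1 - μ i) < 0 := by
    refine sum_neg (fun i hi ↦ one_div_one_sub_neg_of_one_lt ?_) ?_
    · obtain ⟨his, hi_nonneg⟩ := mem_filter.1 hi
      exact (abs_of_nonneg (not_lt.1 hi_nonneg) ▸ habs i his).lt_of_ne' (hne i his)
    · simpa only [filter_nonempty_iff, not_lt] using hnonneg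
  calc ∑ i ∈ s, 1 / (1 - μ i)
      = ∑ i ∈ s with μ i < 0, 1 / (1 - μ i) + ∑ i ∈ s with ¬ μ i < 0, 1 / (1 - μ i) :=
        (sum_filter_add_sum_filter_not ..).symm
    _ < #{i ∈ s | μ i < 0} • (1 / 2 : K) + 0 := add_lt_add_of_le_of_lt neg_part nonneg_part
    _ = #{i ∈ s | μ i < 0} / 2 := by rw [add_zero, nsmul_eq_mul, mul_one_div]

theorem exists_attracting_multiplier_general (hne : ∀ i ∈ s, μ i ≠ 1)
    (hfix : 1 ≤ ∑ i ∈ s, 1 / (1 - μ i)) (hneg : #{i ∈ s | μ i < 0} ≤ 2)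
    (hnonneg : ∃ i ∈ s, 0 ≤ μ i) : ∃ i ∈ s, |μ i| < 1 := by
  by_contra! habs
  have hsum := sum_one_div_one_sub_lt_card_neg_div_two hne habs hnonneg
  have hcard : (#{i ∈ s | μ i < 0} : K) ≤ 2 := mod_cast hneg
  linarith

end LinearOrderedField

/-- If three real multipliers, all different from 1, satisfy the fixed point formula and
not all three are negative, then one of them has absolute value less than 1. -/
theorem exists_attracting_multiplier
    (μ₁ μ₂ μ₃ : ℝ) (h₁ : μ₁ ≠ 1) (h₂ : μ₂ ≠ 1) (h₃ : μ₃ ≠ 1)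
    (hfix : 1 / (1 - μ₁) + 1 / (1 - μ₂) + 1 / (1 - μ₃) = 1)
    (hneg : ¬ (μ₁ < 0 ∧ μ₂ < 0 ∧ μ₃ < 0)) :
    |μ₁| < 1 ∨ |μ₂| < 1 ∨ |μ₃| < 1 := by
  have hnonneg : ∃ i ∈ univ, 0 ≤ ![μ₁, μ₂, μ₃] i := by
    simpa [Fin.exists_fin_succ, or_iff_not_imp_left] using hneg
  have hcard : #{i | ![μ₁, μ₂, μ₃] i < 0} < #(univ : Finset (Fin 3)) :=
    card_lt_card (filter_ssubset.2 (by simpa only [not_lt] using hnonneg))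
  simpa [Fin.exists_fin_succ] using exists_attracting_multiplier_general
    (by simp [Fin.forall_fin_succ, h₁, h₂, h₃]) (by simpa [Fin.sum_univ_three] using hfix.ge)
    (Nat.le_of_lt_succ hcard) hnonneg
end

section
/- Let μ₁, μ₂, μ₃ be real numbers, each different from 1, satisfying the fixed point formula 1/(1−μ₁) + 1/(1−μ₂) + 1/(1−μ₃) = 1. If at most one of μ₁, μ₂, μ₃ is negative, then there exists i ∈ {1,2,3} with 0 ≤ μᵢ < 1. -/
/-!
Since the weights `1 / (1 - μᵢ)` sum to at least `1`, either one of them is at least `1`, which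
means exactly that its multiplier lies in `[0, 1)`, or two of them are positive. A positive weight
means `μᵢ < 1`, and of two such multipliers at least one is non-negative.
-/

theorem exists_le_or_exists_ne_pos_of_le_sum {ι M : Type*} [AddCommMonoid M] [LinearOrder M]
    [IsOrderedAddMonoid M] {s : Finset ι} {w : ι → M} {c : M} (hc : 0 < c)
    (hsum : c ≤ ∑ i ∈ s, w i) :
    (∃ i ∈ s, c ≤ w i) ∨ ∃ i ∈ s, ∃ j ∈ s, i ≠ j ∧ 0 < w i ∧ 0 < w j := by
  classical
  obtain ⟨i, hi, hwi⟩ : ∃ i ∈ s, 0 < w i := by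
    contrapose! hc
    exact hsum.trans (Finset.sum_nonpos hc)
  rcases le_or_gt c (w i) with hci | hic
  · exact .inl ⟨i, hi, hci⟩
  obtain ⟨j, hj, hwj⟩ : ∃ j ∈ s.erase i, 0 < w j := by
    contrapose! hsum
    calc
      ∑ k ∈ s, w k = w i + ∑ k ∈ s.erase i, w k := (Finset.add_sum_erase s w hi).symm
      _ ≤ w i := add_le_of_nonpos_right (Finset.sum_nonpos hsum)
      _ < c := hic
  exact .inr ⟨i, hi, j, Finset.mem_of_mem_erase hj, (Finset.ne_of_mem_erase hj).symm, hwi, hwj⟩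

section OrderedField

variable {K : Type*} [Field K] [LinearOrder K] [IsStrictOrderedRing K]

theorem one_div_one_sub_pos_iff {x : K} : 0 < 1 / (1 - x) ↔ x < 1 := by
  rw [one_div_pos, sub_pos]

theorem one_le_one_div_one_sub_iff {x : K} : 1 ≤ 1 / (1 - x) ↔ 0 ≤ x ∧ x < 1 := by
  rw [one_div, one_le_inv_iff₀, sub_pos, sub_le_self_iff, and_comm]

theorem exists_attracting_multiplier_nonneg_general {ι : Type*} [Fintype ι] (μ : ι → K)
    (_hμ : ∀ i, μ i ≠ 1) (hsum : 1 ≤ ∑ i, 1 / (1 - μ i)) (hneg : {i | μ i < 0}.Subsingleton) :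
    ∃ i, 0 ≤ μ i ∧ μ i < 1 := by
  rcases exists_le_or_exists_ne_pos_of_le_sum one_pos hsum with
    ⟨i, -, hi⟩ | ⟨i, -, j, -, hij, hi, hj⟩
  · exact ⟨i, one_le_one_div_one_sub_iff.mp hi⟩
  · rcases le_or_gt 0 (μ i) with hi₀ | hi₀
    · exact ⟨i, hi₀, one_div_one_sub_pos_iff.mp hi⟩
    · have hj₀ : 0 ≤ μ j := not_lt.mp fun hj₀ ↦ hij (hneg hi₀ hj₀)
      exact ⟨j, hj₀, one_div_one_sub_pos_iff.mp hj⟩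

end OrderedField

/-- If three real multipliers, all different from 1, satisfy the fixed point formula and
at most one of them is negative, then one of them lies in `[0, 1)`. -/
theorem exists_attracting_multiplier_nonneg
    (μ₁ μ₂ μ₃ : ℝ) (h₁ : μ₁ ≠ 1) (h₂ : μ₂ ≠ 1) (h₃ : μ₃ ≠ 1)
    (hfix : 1 / (1 - μ₁) + 1 / (1 - μ₂) + 1 / (1 - μ₃) = 1)
    (hneg : (0 ≤ μ₁ ∧ 0 ≤ μ₂) ∨ (0 ≤ μ₁ ∧ 0 ≤ μ₃) ∨ (0 ≤ μ₂ ∧ 0 ≤ μ₃)) :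
    (0 ≤ μ₁ ∧ μ₁ < 1) ∨ (0 ≤ μ₂ ∧ μ₂ < 1) ∨ (0 ≤ μ₃ ∧ μ₃ < 1) := by
  have hsub : {i | ![μ₁, μ₂, μ₃] i < 0}.Subsingleton := by
    suffices (μ₁ < 0 → 0 ≤ μ₂ ∧ 0 ≤ μ₃) ∧ (μ₂ < 0 → 0 ≤ μ₁ ∧ 0 ≤ μ₃) ∧
        (μ₃ < 0 → 0 ≤ μ₁ ∧ 0 ≤ μ₂) by
      simpa [Set.Subsingleton, Fin.forall_fin_succ] using this
    grind
  simpa [Fin.exists_fin_succ] using exists_attracting_multiplier_nonneg_general ![μ₁, μ₂, μ₃]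
    (by simp [Fin.forall_fin_succ, h₁, h₂, h₃]) (by simpa [Fin.sum_univ_three] using hfix.ge) hsub
end

section
/- Fix μ > 1 and define g_μ : ℝ → ℝ by g_μ(x) = (1/μ)(x + 1/x) (with the convention 1/0 = 0). Let p = 1/√(μ−1). Then g_μ(p) = p, and for every x > 0 the orbit stays in (0,∞) and the iterates g_μ^[n](x) converge to p as n → ∞. -/
open Filter

/-!
With `p = 1 / √(μ - 1)`, the map is the weighted mean `(1 - w) * x + w * (p ^ 2 / x)` for
`w = 1 - 1 / μ`, and `x` and `p ^ 2 / x` are mirror images of each other about `p` in logarithmic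
scale. Writing `x = p * exp t`, the energy `(x - p) ^ 2 / x = 2 * p * (cosh t - 1)` takes the same
value at the two points. One step multiplies it by the factor
`((1 - w) * x - w * p) ^ 2 / ((1 - w) * x ^ 2 + w * p ^ 2)`, which is at most `max (1 - w) w < 1`,
so the energy decays geometrically along every positive orbit.
-/

section OrderedField

variable {K : Type*} [Field K]

/-- One step of the relaxed Heron (Babylonian) iteration for the square root `p` of `p ^ 2`, with
relaxation weight `w`; `w = 1 / 2` is the classical method. -/
def relaxedHeron (w p x : K) : K := (1 - w) * x + w * (p ^ 2 / x)

/-- The energy that measures the distance of a positive `x` from `p`, a Lyapunov function for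
`relaxedHeron w p`. -/
def heronEnergy (p x : K) : K := (x - p) ^ 2 / x

lemma relaxedHeron_self (w p : K) : relaxedHeron w p p = p := by
  rw [relaxedHeron, sq, mul_self_div_self]
  ring

lemma relaxedHeron_sub_self (w p : K) {x : K} (hx : x ≠ 0) :
    relaxedHeron w p x - p = (x - p) * ((1 - w) * x - w * p) / x := by
  rw [relaxedHeron]
  field_simp
  ring

lemma heronEnergy_relaxedHeron (w p : K) {x : K} (hx : x ≠ 0) :
    heronEnergy p (relaxedHeron w p x) =
      ((1 - w) * x - w * p) ^ 2 / ((1 - w) * x ^ 2 + w * p ^ 2) * heronEnergy p x := by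
  have step_eq : relaxedHeron w p x = ((1 - w) * x ^ 2 + w * p ^ 2) / x := by
    rw [relaxedHeron]
    field_simp
  rw [heronEnergy, relaxedHeron_sub_self w p hx, step_eq, heronEnergy]
  field_simp

variable [LinearOrder K] [IsStrictOrderedRing K] {w p x : K}

lemma relaxedHeron_pos (hw₀ : 0 ≤ w) (hw₁ : w ≤ 1) (hp : p ≠ 0) (hx : 0 < x) :
    0 < relaxedHeron w p x :=
  convex_Ioi (0 : K) hx (div_pos (sq_pos_of_ne_zero hp) hx) (sub_nonneg.2 hw₁) hw₀
    (sub_add_cancel 1 w)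

lemma iterate_relaxedHeron_pos (hw₀ : 0 ≤ w) (hw₁ : w ≤ 1) (hp : p ≠ 0) (hx : 0 < x) (n : ℕ) :
    0 < (relaxedHeron w p)^[n] x :=
  Set.MapsTo.iterate (s := Set.Ioi 0) (fun _ hy ↦ relaxedHeron_pos hw₀ hw₁ hp hy) n hx

lemma heronEnergy_nonneg (p : K) (hx : 0 ≤ x) : 0 ≤ heronEnergy p x :=
  div_nonneg (sq_nonneg _) hx

lemma le_heronEnergy_add (p : K) (hx : 0 < x) : x ≤ heronEnergy p x + 2 * p := by
  have energy_eq : heronEnergy p x + 2 * p = x + p ^ 2 / x := by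
    rw [heronEnergy]
    field_simp
    ring
  rw [energy_eq]
  exact le_add_of_nonneg_right (by positivity)

lemma sq_sub_le_heronEnergy_mul (p : K) (hx : 0 < x) :
    (x - p) ^ 2 ≤ heronEnergy p x * (heronEnergy p x + 2 * p) :=
  calc (x - p) ^ 2 = heronEnergy p x * x := (div_mul_cancel₀ _ hx.ne').symm
    _ ≤ heronEnergy p x * (heronEnergy p x + 2 * p) :=
      mul_le_mul_of_nonneg_left (le_heronEnergy_add p hx) (heronEnergy_nonneg p hx.le)

lemma sq_weighted_sub_le (hw₀ : 0 ≤ w) (hw₁ : w ≤ 1) (hp : 0 ≤ p) (hx : 0 ≤ x) :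
    ((1 - w) * x - w * p) ^ 2 ≤ max (1 - w) w * ((1 - w) * x ^ 2 + w * p ^ 2) := by
  have : 0 ≤ 1 - w := sub_nonneg.2 hw₁
  have cross_nonneg : 0 ≤ (1 - w) * x * (w * p) := by positivity
  calc ((1 - w) * x - w * p) ^ 2
      ≤ (1 - w) * ((1 - w) * x ^ 2) + w * (w * p ^ 2) := by linarith
    _ ≤ max (1 - w) w * ((1 - w) * x ^ 2) + max (1 - w) w * (w * p ^ 2) := by
        gcongr
        exacts [le_max_left _ _, le_max_right _ _]
    _ = max (1 - w) w * ((1 - w) * x ^ 2 + w * p ^ 2) := by ring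

lemma heronEnergy_relaxedHeron_le (hw₀ : 0 ≤ w) (hw₁ : w ≤ 1) (hp : 0 ≤ p) (hx : 0 < x) :
    heronEnergy p (relaxedHeron w p x) ≤ max (1 - w) w * heronEnergy p x := by
  have : 0 ≤ 1 - w := sub_nonneg.2 hw₁
  rw [heronEnergy_relaxedHeron w p hx.ne']
  refine mul_le_mul_of_nonneg_right ?_ (heronEnergy_nonneg p hx.le)
  exact div_le_of_le_mul₀ (by positivity) (by positivity) (sq_weighted_sub_le hw₀ hw₁ hp hx.le)

end OrderedField

section Convergence

variable {w p x : ℝ}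

lemma tendsto_of_tendsto_heronEnergy {ι : Type*} {l : Filter ι} {u : ι → ℝ}
    (hu : ∀ᶠ i in l, 0 < u i) (h : Tendsto (fun i ↦ heronEnergy p (u i)) l (nhds 0)) :
    Tendsto u l (nhds p) := by
  have bound_tendsto :
      Tendsto (fun i ↦ √(heronEnergy p (u i) * (heronEnergy p (u i) + 2 * p))) l (nhds 0) := by
    simpa using (h.mul (h.add_const (2 * p))).sqrt
  refine tendsto_iff_dist_tendsto_zero.2 <|
    squeeze_zero' (.of_forall fun _ ↦ dist_nonneg) ?_ bound_tendsto
  filter_upwards [hu] with i hi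
  exact Real.abs_le_sqrt (sq_sub_le_heronEnergy_mul p hi)

lemma heronEnergy_iterate_le (hw₀ : 0 ≤ w) (hw₁ : w ≤ 1) (hp : 0 < p) (hx : 0 < x) (n : ℕ) :
    heronEnergy p ((relaxedHeron w p)^[n] x) ≤ max (1 - w) w ^ n * heronEnergy p x := by
  refine le_geom (u := fun m ↦ heronEnergy p ((relaxedHeron w p)^[m] x))
    (le_max_of_le_right hw₀) n fun m _ ↦ ?_
  simp only [Function.iterate_succ_apply']
  exact heronEnergy_relaxedHeron_le hw₀ hw₁ hp.le (iterate_relaxedHeron_pos hw₀ hw₁ hp.ne' hx m)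

theorem tendsto_iterate_relaxedHeron (hw₀ : 0 < w) (hw₁ : w < 1) (hp : 0 < p) (hx : 0 < x) :
    Tendsto (fun n ↦ (relaxedHeron w p)^[n] x) atTop (nhds p) := by
  have orbit_pos := iterate_relaxedHeron_pos hw₀.le hw₁.le hp.ne' hx
  have rate_lt_one : max (1 - w) w < 1 := max_lt (sub_lt_self 1 hw₀) hw₁
  have bound_tendsto :
      Tendsto (fun n : ℕ ↦ max (1 - w) w ^ n * heronEnergy p x) atTop (nhds 0) := by
    simpa only [zero_mul] using (tendsto_pow_atTop_nhds_zero_of_lt_one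
      (le_max_of_le_right hw₀.le) rate_lt_one).mul_const (heronEnergy p x)
  exact tendsto_of_tendsto_heronEnergy (.of_forall orbit_pos) <|
    squeeze_zero (fun n ↦ heronEnergy_nonneg p (orbit_pos n).le)
      (heronEnergy_iterate_le hw₀.le hw₁.le hp hx) bound_tendsto

end Convergence

lemma one_div_mul_add_one_div_eq_relaxedHeron {μ : ℝ} (hμ : 1 < μ) (x : ℝ) :
    1 / μ * (x + 1 / x) = relaxedHeron (1 - 1 / μ) (1 / √(μ - 1)) x := by
  have weight_mul_sq : (1 - 1 / μ) * (1 / √(μ - 1)) ^ 2 = 1 / μ := by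
    have : μ - 1 ≠ 0 := (sub_pos.2 hμ).ne'
    rw [div_pow, Real.sq_sqrt (sub_pos.2 hμ).le]
    field_simp
  rw [relaxedHeron, ← mul_div_assoc, weight_mul_sq]
  ring

/-- For `μ > 1`, the map `x ↦ (1/μ)(x + 1/x)` fixes `p = 1/√(μ−1)`, preserves `(0,∞)`, and
every orbit starting in `(0,∞)` converges to `p`. -/
theorem symmetry_locus_orbits_converge (μ : ℝ) (hμ : 1 < μ) :
    let g : ℝ → ℝ := fun x => (1 / μ) * (x + 1 / x)
    let p : ℝ := 1 / Real.sqrt (μ - 1)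
    g p = p ∧ (∀ x : ℝ, 0 < x → ∀ n : ℕ, 0 < g^[n] x) ∧
      (∀ x : ℝ, 0 < x → Tendsto (fun n => g^[n] x) atTop (nhds p)) := by
  intro g p
  have g_eq : g = relaxedHeron (1 - 1 / μ) p := funext (one_div_mul_add_one_div_eq_relaxedHeron hμ)
  have hμ₀ : 0 < μ := one_pos.trans hμ
  have hw₀ : 0 < 1 - 1 / μ := sub_pos.2 ((div_lt_one hμ₀).2 hμ)
  have hw₁ : 1 - 1 / μ < 1 := sub_lt_self 1 (one_div_pos.2 hμ₀)
  have hp : 0 < p := one_div_pos.2 (Real.sqrt_pos.2 (sub_pos.2 hμ))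
  rw [g_eq]
  exact ⟨relaxedHeron_self _ p, fun _ hx ↦ iterate_relaxedHeron_pos hw₀.le hw₁.le hp.ne' hx,
    fun _ hx ↦ tendsto_iterate_relaxedHeron hw₀ hw₁ hp hx⟩
end

section
/- Fix μ < −1 and define g_μ : ℝ → ℝ by g_μ(x) = (1/μ)(x + 1/x) (with the convention 1/0 = 0). Let q = 1/√(−μ−1). Then g_μ(q) = −q and g_μ(−q) = q, so {q, −q} is a 2-cycle; the multiplier of this cycle satisfies g_μ'(q) · g_μ'(−q) = ((2+μ)/μ)² < 1; moreover g_μ(x) ≠ 0 for every x ≠ 0, and for every x ≠ 0 the sequence of even iterates g_μ^[2n](x) converges, with limit equal to q or to −q. -/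
open Filter

/-!
Put `a = -μ > 1`. The map `f x = (x + 1/x) / a` is `-g`, and both are odd, so `f` and `g` have the
same even iterates and it suffices to show that `f` attracts every `x > 0` to its fixed point `q`.
Since `a q² = q² + 1`, the function `V x = (x - q)² / x` satisfies
`V (f x) = (q x - 1)² / ((q² + 1) (x² + 1)) * V x`. By Lagrange's identity
`(q x - 1)² + (x + q)² = (q² + 1) (x² + 1)`, the factor is `1 - (x + q)² / ((q² + 1) (x² + 1))`,
which is at most `1 - q² / (q² + 1)²` for `x > 0` since then `(x + q)² ≥ x² + q²`. So `V` decays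
geometrically along orbits, and `V → 0` forces convergence to `q`.
-/

open Function Topology

/-- The family `x ↦ (1/μ)(x + 1/x)` parametrizing the symmetry locus, as a map of the affine line;
the pole `0` is sent to `0` because `1 / 0 = 0`. -/
def symmetryLocusMap {K : Type*} [Field K] (μ x : K) : K :=
  (1 / μ) * (x + 1 / x)

/-- The Lyapunov function `(x - q)² / x` of the attracting point `q` on the positive half-line:
a squared distance to `q` weighted so that it is invariant under `x ↦ q² / x`. -/
def deviation {K : Type*} [Field K] (q x : K) : K :=
  (x - q) ^ 2 / x

section Field

variable {K : Type*} [Field K]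

theorem ne_zero_of_mul_sq_eq_one {c q : K} (h : c * q ^ 2 = 1) : q ≠ 0 :=
  (pow_ne_zero_iff two_ne_zero).1 (right_ne_zero_of_mul_eq_one h)

theorem symmetryLocusMap_neg_right (μ x : K) :
    symmetryLocusMap μ (-x) = -symmetryLocusMap μ x := by
  simp only [symmetryLocusMap, one_div, inv_neg]
  ring

theorem symmetryLocusMap_neg_left (μ x : K) :
    symmetryLocusMap (-μ) x = -symmetryLocusMap μ x := by
  simp only [symmetryLocusMap, one_div, inv_neg, neg_mul]

theorem commute_neg_symmetryLocusMap (μ : K) :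
    Function.Commute Neg.neg (symmetryLocusMap μ) :=
  fun x => (symmetryLocusMap_neg_right μ x).symm

theorem iterate_symmetryLocusMap_neg_right (μ x : K) (n : ℕ) :
    (symmetryLocusMap μ)^[n] (-x) = -(symmetryLocusMap μ)^[n] x :=
  ((commute_neg_symmetryLocusMap μ).iterate_right n x).symm

theorem iterate_two_mul_symmetryLocusMap_neg_left (μ : K) (n : ℕ) :
    (symmetryLocusMap (-μ))^[2 * n] = (symmetryLocusMap μ)^[2 * n] := by
  have h : symmetryLocusMap (-μ) = Neg.neg ∘ symmetryLocusMap μ :=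
    funext (symmetryLocusMap_neg_left μ)
  rw [h, (commute_neg_symmetryLocusMap μ).comp_iterate, neg_involutive.iterate_two_mul, id_comp]

theorem isFixedPt_symmetryLocusMap {a q : K} (ha : a ≠ 0) (hq : (a - 1) * q ^ 2 = 1) :
    IsFixedPt (symmetryLocusMap a) q := by
  have hq0 : q ≠ 0 := ne_zero_of_mul_sq_eq_one hq
  simp only [IsFixedPt, symmetryLocusMap]
  field_simp
  linear_combination -hq

theorem symmetryLocusMap_eq_neg {μ q : K} (hμ : μ ≠ 0) (hq : (-μ - 1) * q ^ 2 = 1) :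
    symmetryLocusMap μ q = -q := by
  rw [← neg_eq_iff_eq_neg, ← symmetryLocusMap_neg_left]
  exact isFixedPt_symmetryLocusMap (neg_ne_zero.2 hμ) hq

end Field

section Multiplier

variable {𝕜 : Type*} [NontriviallyNormedField 𝕜]

theorem hasDerivAt_symmetryLocusMap (μ : 𝕜) {x : 𝕜} (hx : x ≠ 0) :
    HasDerivAt (symmetryLocusMap μ) ((1 / μ) * (1 - 1 / x ^ 2)) x := by
  unfold symmetryLocusMap
  simpa only [one_div, sub_eq_add_neg] using
    ((hasDerivAt_id' x).fun_add (hasDerivAt_inv hx)).const_mul (1 / μ)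

theorem deriv_symmetryLocusMap_mul_deriv_neg {μ q : 𝕜} (hq : (-μ - 1) * q ^ 2 = 1) :
    deriv (symmetryLocusMap μ) q * deriv (symmetryLocusMap μ) (-q) = ((2 + μ) / μ) ^ 2 := by
  have hq0 : q ≠ 0 := ne_zero_of_mul_sq_eq_one hq
  have hinv : 1 / q ^ 2 = -μ - 1 := (eq_one_div_of_mul_eq_one_left hq).symm
  rw [(hasDerivAt_symmetryLocusMap μ hq0).deriv,
    (hasDerivAt_symmetryLocusMap μ (neg_ne_zero.2 hq0)).deriv, neg_sq, hinv]
  ring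

end Multiplier

section LinearOrderedField

variable {K : Type*} [Field K] [LinearOrder K] [IsStrictOrderedRing K] {a q x : K}

theorem two_add_div_sq_lt_one {μ : K} (hμ : μ < -1) : ((2 + μ) / μ) ^ 2 < 1 := by
  have hμ0 : μ ≠ 0 := by linarith
  rw [div_pow, div_lt_one (by positivity)]
  linarith

theorem one_lt_of_sub_one_mul_sq_eq_one (hq : (a - 1) * q ^ 2 = 1) : 1 < a :=
  sub_pos.1 (pos_of_mul_pos_left (one_pos.trans_eq hq.symm) (sq_nonneg q))

theorem symmetryLocusMap_pos (ha : 0 < a) (hx : 0 < x) : 0 < symmetryLocusMap a x := by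
  unfold symmetryLocusMap
  positivity

theorem symmetryLocusMap_ne_zero {μ : K} (hμ : μ ≠ 0) (hx : x ≠ 0) :
    symmetryLocusMap μ x ≠ 0 := by
  have h : x + 1 / x = (x ^ 2 + 1) / x := by field_simp
  rw [symmetryLocusMap, h]
  positivity

theorem iterate_symmetryLocusMap_pos (ha : 0 < a) (hx : 0 < x) (n : ℕ) :
    0 < (symmetryLocusMap a)^[n] x :=
  Set.MapsTo.iterate (s := Set.Ioi 0) (fun _ hy => symmetryLocusMap_pos ha hy) n hx

theorem deviation_nonneg (q : K) (hx : 0 < x) : 0 ≤ deviation q x := by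
  unfold deviation
  positivity

theorem sq_sub_le_deviation_mul (q : K) (hx : 0 < x) :
    (x - q) ^ 2 ≤ deviation q x * (deviation q x + 2 * q) := by
  have hsq : (x - q) ^ 2 = deviation q x * x := by
    rw [deviation, div_mul_cancel₀ _ hx.ne']
  have hle : x ≤ deviation q x + 2 * q := by
    have hsub : deviation q x + 2 * q - x = q ^ 2 / x := by
      rw [deviation]
      field_simp
      ring
    have : 0 ≤ q ^ 2 / x := by positivity
    linarith
  rw [hsq]
  exact mul_le_mul_of_nonneg_left hle (deviation_nonneg q hx)

theorem deviation_symmetryLocusMap (hq : (a - 1) * q ^ 2 = 1) (hx : x ≠ 0) :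
    deviation q (symmetryLocusMap a x) =
      (q * x - 1) ^ 2 / ((q ^ 2 + 1) * (x ^ 2 + 1)) * deviation q x := by
  have hq0 : q ≠ 0 := ne_zero_of_mul_sq_eq_one hq
  have ha : a ≠ 0 := (one_pos.trans (one_lt_of_sub_one_mul_sq_eq_one hq)).ne'
  have haq : q ^ 2 + 1 = a * q ^ 2 := by linear_combination -hq
  have hx1 : x ^ 2 + 1 ≠ 0 := by positivity
  have hsub : symmetryLocusMap a x - q = (x - q) * (q * x - 1) / (a * q * x) := by
    rw [symmetryLocusMap]
    field_simp
    linear_combination -x * hq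
  have hmap : symmetryLocusMap a x = (x ^ 2 + 1) / (a * x) := by
    rw [symmetryLocusMap]
    field_simp
  rw [deviation, hsub, hmap, deviation, haq]
  field_simp

theorem sq_mul_sub_one_div_le (hqx : 0 ≤ q * x) :
    (q * x - 1) ^ 2 / ((q ^ 2 + 1) * (x ^ 2 + 1)) ≤ 1 - q ^ 2 / (q ^ 2 + 1) ^ 2 := by
  have lagrange : (q * x - 1) ^ 2 / ((q ^ 2 + 1) * (x ^ 2 + 1)) =
      1 - (x + q) ^ 2 / ((q ^ 2 + 1) * (x ^ 2 + 1)) := by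
    field_simp
    ring
  have hle : q ^ 2 * (x ^ 2 + 1) ≤ (x + q) ^ 2 * (q ^ 2 + 1) :=
    calc q ^ 2 * (x ^ 2 + 1) ≤ (x ^ 2 + q ^ 2) * (q ^ 2 + 1) := by
          linarith [sq_nonneg x, sq_nonneg (q ^ 2)]
      _ ≤ (x + q) ^ 2 * (q ^ 2 + 1) := by
          gcongr
          linarith
  rw [lagrange]
  gcongr 1 - ?_
  rw [div_le_div_iff₀ (by positivity) (by positivity)]
  linear_combination (q ^ 2 + 1) * hle

theorem deviation_symmetryLocusMap_le (hq0 : 0 ≤ q) (hq : (a - 1) * q ^ 2 = 1) (hx : 0 < x) :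
    deviation q (symmetryLocusMap a x) ≤ (1 - q ^ 2 / (q ^ 2 + 1) ^ 2) * deviation q x := by
  rw [deviation_symmetryLocusMap hq hx.ne']
  exact mul_le_mul_of_nonneg_right (sq_mul_sub_one_div_le (mul_nonneg hq0 hx.le))
    (deviation_nonneg q hx)

end LinearOrderedField

section Convergence

variable {a q x : ℝ}

theorem tendsto_of_tendsto_deviation {ι : Type*} {l : Filter ι} {u : ι → ℝ}
    (hu : ∀ᶠ i in l, 0 < u i) (h : Tendsto (fun i => deviation q (u i)) l (𝓝 0)) :
    Tendsto u l (𝓝 q) := by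
  have hbound : Tendsto (fun i => deviation q (u i) * (deviation q (u i) + 2 * q)) l (𝓝 0) := by
    simpa using h.mul (h.add_const (2 * q))
  have hsq : Tendsto (fun i => (u i - q) ^ 2) l (𝓝 0) :=
    squeeze_zero' (Eventually.of_forall fun i => sq_nonneg (u i - q))
      (hu.mono fun _ hi => sq_sub_le_deviation_mul q hi) hbound
  have habs : Tendsto (fun i => |u i - q|) l (𝓝 0) := by
    simpa [Real.sqrt_sq_eq_abs] using hsq.sqrt
  exact tendsto_sub_nhds_zero_iff.1 ((tendsto_zero_iff_abs_tendsto_zero _).2 habs)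

theorem tendsto_deviation_iterate_symmetryLocusMap (hq0 : 0 < q) (hq : (a - 1) * q ^ 2 = 1)
    (hx : 0 < x) :
    Tendsto (fun n => deviation q ((symmetryLocusMap a)^[n] x)) atTop (𝓝 0) := by
  have hrate : 1 - q ^ 2 / (q ^ 2 + 1) ^ 2 < 1 := sub_lt_self _ (by positivity)
  have ha : 0 < a := one_pos.trans (one_lt_of_sub_one_mul_sq_eq_one hq)
  have hpos : ∀ n, 0 < (symmetryLocusMap a)^[n] x := iterate_symmetryLocusMap_pos ha hx
  refine (summable_of_ratio_norm_eventually_le hrate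
    (Eventually.of_forall fun n => ?_)).tendsto_atTop_zero
  rw [Real.norm_of_nonneg (deviation_nonneg q (hpos _)),
    Real.norm_of_nonneg (deviation_nonneg q (hpos _)), iterate_succ_apply']
  exact deviation_symmetryLocusMap_le hq0.le hq (hpos n)

theorem tendsto_iterate_symmetryLocusMap (hq0 : 0 < q) (hq : (a - 1) * q ^ 2 = 1)
    (hx : 0 < x) :
    Tendsto (fun n => (symmetryLocusMap a)^[n] x) atTop (𝓝 q) :=
  have ha : 0 < a := one_pos.trans (one_lt_of_sub_one_mul_sq_eq_one hq)
  tendsto_of_tendsto_deviation (Eventually.of_forall (iterate_symmetryLocusMap_pos ha hx))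
    (tendsto_deviation_iterate_symmetryLocusMap hq0 hq hx)

theorem tendsto_iterate_two_mul_symmetryLocusMap_of_pos {μ : ℝ} (hq0 : 0 < q)
    (hq : (-μ - 1) * q ^ 2 = 1) (hx : 0 < x) :
    Tendsto (fun n => (symmetryLocusMap μ)^[2 * n] x) atTop (𝓝 q) := by
  simp only [← iterate_two_mul_symmetryLocusMap_neg_left μ]
  exact (tendsto_iterate_symmetryLocusMap hq0 hq hx).comp
    (tendsto_id.const_mul_atTop' two_pos)

theorem tendsto_iterate_two_mul_symmetryLocusMap_of_neg {μ : ℝ} (hq0 : 0 < q)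
    (hq : (-μ - 1) * q ^ 2 = 1) (hx : x < 0) :
    Tendsto (fun n => (symmetryLocusMap μ)^[2 * n] x) atTop (𝓝 (-q)) := by
  have h := (tendsto_iterate_two_mul_symmetryLocusMap_of_pos hq0 hq (neg_pos.2 hx)).neg
  simpa only [iterate_symmetryLocusMap_neg_right, neg_neg] using h

end Convergence

/-- For `μ < −1`, the map `g(x) = (1/μ)(x + 1/x)` has the attracting 2-cycle
`{±1/√(−μ−1)}`, of multiplier `((2+μ)/μ)² < 1`, and every nonzero real point converges
under iteration to this 2-cycle. -/
theorem symmetry_locus_two_cycle (μ : ℝ) (hμ : μ < -1) :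
    let g : ℝ → ℝ := fun x => (1 / μ) * (x + 1 / x)
    let q : ℝ := 1 / Real.sqrt (-μ - 1)
    g q = -q ∧ g (-q) = q ∧
      deriv g q * deriv g (-q) = ((2 + μ) / μ) ^ 2 ∧ ((2 + μ) / μ) ^ 2 < 1 ∧
      (∀ x : ℝ, x ≠ 0 → g x ≠ 0) ∧
      (∀ x : ℝ, x ≠ 0 → ∃ L : ℝ, (L = q ∨ L = -q) ∧
        Tendsto (fun n => g^[2 * n] x) atTop (nhds L)) := by
  intro g q
  have hμ0 : μ ≠ 0 := by linarith
  have hs : 0 < -μ - 1 := by linarith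
  have hq0 : 0 < q := one_div_pos.2 (Real.sqrt_pos.2 hs)
  have hq : (-μ - 1) * q ^ 2 = 1 := by
    rw [div_pow, one_pow, Real.sq_sqrt hs.le, mul_one_div_cancel hs.ne']
  have hgq : g q = -q := symmetryLocusMap_eq_neg hμ0 hq
  have hgnq : g (-q) = q := (symmetryLocusMap_neg_right μ q).trans (neg_eq_iff_eq_neg.2 hgq)
  refine ⟨hgq, hgnq, deriv_symmetryLocusMap_mul_deriv_neg hq, two_add_div_sq_lt_one hμ,
    fun x hx => symmetryLocusMap_ne_zero hμ0 hx, fun x hx => ?_⟩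
  rcases hx.lt_or_gt with hneg | hpos
  · exact ⟨-q, Or.inr rfl, tendsto_iterate_two_mul_symmetryLocusMap_of_neg hq0 hq hneg⟩
  · exact ⟨q, Or.inl rfl, tendsto_iterate_two_mul_symmetryLocusMap_of_pos hq0 hq hpos⟩
end

section
/- Define the Schwarzian derivative of a function f at x by S f(x) = f'''(x)/f'(x) − (3/2)·(f''(x)/f'(x))², using iterated derivatives. (1) For μ ≠ 0 and a ∈ ℝ, let f(x) = (1/μ)(x + 1/x) + a (convention 1/0 = 0); then for every x ∉ {−1, 0, 1} one has S f(x) = −6/(x²−1)², which is negative. (2) For c ∈ ℝ, let g(x) = x² + c; then for every x ≠ 0 one has S g(x) = −3/(2x²), which is negative. -/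
/-- The Schwarzian derivative `S f = f'''/f' − (3/2)(f''/f')²`, using iterated derivatives. -/
noncomputable def schwarzianDeriv (f : ℝ → ℝ) (x : ℝ) : ℝ :=
  deriv (deriv (deriv f)) x / deriv f x - (3 / 2) * (deriv (deriv f) x / deriv f x) ^ 2

/-!
Post-composition with an affine map does not change the Schwarzian derivative, so the parameters
`μ`, `a` and `c` drop out and only `x + 1 / x` and `x ^ 2` have to be computed.
-/

open Topology

theorem schwarzianDeriv_add_const (f : ℝ → ℝ) (c x : ℝ) :
    schwarzianDeriv (fun y => f y + c) x = schwarzianDeriv f x := by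
  simp only [schwarzianDeriv, deriv_add_const']

theorem schwarzianDeriv_const_mul {k : ℝ} (hk : k ≠ 0) (f : ℝ → ℝ) (x : ℝ) :
    schwarzianDeriv (fun y => k * f y) x = schwarzianDeriv f x := by
  simp only [schwarzianDeriv, deriv_const_mul_field', mul_div_mul_left _ _ hk]

theorem schwarzianDeriv_eq_of_deriv_eventuallyEq {f g : ℝ → ℝ} {x : ℝ}
    (h : deriv f =ᶠ[𝓝 x] g) :
    schwarzianDeriv f x = deriv (deriv g) x / g x - (3 / 2) * (deriv g x / g x) ^ 2 := by
  rw [schwarzianDeriv, h.deriv.deriv_eq, h.deriv_eq, h.eq_of_nhds]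

theorem schwarzianDeriv_zpow {n : ℤ} (hn : n ≠ 0) {x : ℝ} (hx : x ≠ 0) :
    schwarzianDeriv (fun y => y ^ n) x = (1 - n ^ 2) / (2 * x ^ 2) := by
  have hn' : (n : ℝ) ≠ 0 := Int.cast_ne_zero.mpr hn
  simp only [schwarzianDeriv, deriv_zpow', deriv_const_mul_field', zpow_sub_one₀ hx]
  push_cast
  field_simp
  ring

theorem hasDerivAt_id_add_const_div {𝕜 : Type*} [NontriviallyNormedField 𝕜] (k : 𝕜) {x : 𝕜}
    (hx : x ≠ 0) :
    HasDerivAt (fun y => y + k / y) (1 - k * x ^ (-2 : ℤ)) x := by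
  simpa [div_eq_mul_inv, sub_eq_add_neg, zpow_neg] using
    (hasDerivAt_id' x).fun_add ((hasDerivAt_inv hx).const_mul k)

theorem schwarzianDeriv_id_add_const_div {k x : ℝ} (hx : x ≠ 0) (hxk : x ^ 2 ≠ k) :
    schwarzianDeriv (fun y => y + k / y) x = -6 * k / (x ^ 2 - k) ^ 2 := by
  -- `y + k / y` need not be differentiable at `0`, so this equality is only local; in contrast,
  -- `deriv_zpow'` holds everywhere, which makes the later derivatives global identities.
  have deriv_eq : deriv (fun y => y + k / y) =ᶠ[𝓝 x] fun y => 1 - k * y ^ (-2 : ℤ) :=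
    (eventually_ne_nhds hx).mono fun y hy => (hasDerivAt_id_add_const_div k hy).deriv
  have first_deriv : 1 - k * x ^ (-2 : ℤ) = (x ^ 2 - k) / x ^ 2 := by
    field_simp
  have second_deriv :
      deriv (fun y : ℝ => 1 - k * y ^ (-2 : ℤ)) = fun y => 2 * k * y ^ (-3 : ℤ) := by
    funext y
    simp only [deriv_const_sub, deriv_const_mul_field', deriv_zpow']
    norm_num
    ring
  have third_deriv : deriv (fun y : ℝ => 2 * k * y ^ (-3 : ℤ)) x = -6 * k * x ^ (-4 : ℤ) := by
    simp only [deriv_const_mul_field', deriv_zpow']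
    norm_num
    ring
  have hxk' : x ^ 2 - k ≠ 0 := sub_ne_zero.mpr hxk
  rw [schwarzianDeriv_eq_of_deriv_eventuallyEq deriv_eq, second_deriv, third_deriv, first_deriv]
  field_simp
  ring

/-- The Schwarzian derivative of a real quadratic rational map with real critical points
is negative: explicitly `S f(x) = −6/(x²−1)²` for `f(x) = (1/μ)(x + 1/x) + a`, and
`S g(x) = −3/(2x²)` for `g(x) = x² + c`. -/
theorem schwarzian_negative :
    (∀ μ : ℝ, μ ≠ 0 → ∀ a : ℝ, ∀ x : ℝ, x ∉ ({-1, 0, 1} : Set ℝ) →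
      schwarzianDeriv (fun y => (1 / μ) * (y + 1 / y) + a) x = -6 / (x ^ 2 - 1) ^ 2 ∧
        -6 / (x ^ 2 - 1) ^ 2 < 0) ∧
    (∀ c : ℝ, ∀ x : ℝ, x ≠ 0 →
      schwarzianDeriv (fun y => y ^ 2 + c) x = -3 / (2 * x ^ 2) ∧
        -3 / (2 * x ^ 2) < 0) := by
  refine ⟨fun μ hμ a x hx => ?_, fun c x hx => ?_⟩
  · simp only [Set.mem_insert_iff, Set.mem_singleton_iff, not_or] at hx
    obtain ⟨hx_neg_one, hx_zero, hx_one⟩ := hx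
    have hx_sq : x ^ 2 ≠ 1 := sq_ne_one_iff.mpr ⟨hx_one, hx_neg_one⟩
    refine ⟨?_, div_neg_of_neg_of_pos (by norm_num) (sq_pos_of_ne_zero (sub_ne_zero.mpr hx_sq))⟩
    rw [schwarzianDeriv_add_const, schwarzianDeriv_const_mul (one_div_ne_zero hμ),
      schwarzianDeriv_id_add_const_div hx_zero hx_sq, mul_one]
  · refine ⟨?_, div_neg_of_neg_of_pos (by norm_num) (by positivity)⟩
    have schwarzian_sq : schwarzianDeriv (fun y => y ^ 2) x = (1 - 2 ^ 2) / (2 * x ^ 2) :=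
      mod_cast schwarzianDeriv_zpow (n := 2) two_ne_zero hx
    rw [schwarzianDeriv_add_const, schwarzian_sq]
    norm_num
end

section
/- For real parameters μ > 0 and t > 2, define f_{μ,t} : ℝ → ℝ by f_{μ,t}(x) = 2μx(tx+2)/(μ²x² + (tx+2)²). Then −1 ≤ −2/t < −2/(μ+t) < 0, f_{μ,t}(−2/t) = 0, f_{μ,t}(−2/(μ+t)) = −1, and for every y ∈ [−1, 0] there exist x₁ ∈ [−2/t, −2/(μ+t)] and x₂ ∈ [−2/(μ+t), 0] with f_{μ,t}(x₁) = y and f_{μ,t}(x₂) = y; that is, the interval [−1,0] is doubly covered by the subinterval [−2/t, 0] of itself. -/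
/-!
With `a = μ x` and `b = t x + 2` the map is `2ab / (a² + b²)`. It vanishes exactly where `a = 0` or
`b = 0`, and it equals `-1` exactly where `a + b = 0`, because `2ab + (a² + b²) = (a + b)²`. So it
takes the values `0, -1, 0` at `-2/t, -2/(μ+t), 0`, and the intermediate value theorem on the
segments between consecutive points gives the two coverings.
-/

open Set

/-- The normal form `f_{μ,t}`, a real map whose double covering of `[-1, 0]` is studied here. It is
defined for all parameters; the denominator can vanish only when `μ = 0`, where the map is `0`. -/
noncomputable def normalForm (μ t x : ℝ) : ℝ :=
  2 * μ * x * (t * x + 2) / (μ ^ 2 * x ^ 2 + (t * x + 2) ^ 2)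

namespace normalForm

variable {μ t : ℝ}

theorem denom_pos (hμ : μ ≠ 0) (t x : ℝ) : 0 < μ ^ 2 * x ^ 2 + (t * x + 2) ^ 2 := by
  rcases eq_or_ne x 0 with rfl | hx
  · norm_num
  · positivity

protected theorem continuous (hμ : μ ≠ 0) (t : ℝ) : Continuous (normalForm μ t) :=
  Continuous.div (by fun_prop) (by fun_prop) fun x => (denom_pos hμ t x).ne'

theorem eq_zero_iff (hμ : μ ≠ 0) {x : ℝ} : normalForm μ t x = 0 ↔ x = 0 ∨ t * x + 2 = 0 := by
  simp [normalForm, hμ, (denom_pos hμ t x).ne']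

theorem eq_neg_one_iff (hμ : μ ≠ 0) {x : ℝ} : normalForm μ t x = -1 ↔ (μ + t) * x + 2 = 0 := by
  have num_add_denom : 2 * μ * x * (t * x + 2) + (μ ^ 2 * x ^ 2 + (t * x + 2) ^ 2)
      = ((μ + t) * x + 2) ^ 2 := by ring
  rw [normalForm, div_eq_iff (denom_pos hμ t x).ne', neg_one_mul, eq_neg_iff_add_eq_zero,
    num_add_denom, sq_eq_zero_iff]

theorem apply_zero (μ t : ℝ) : normalForm μ t 0 = 0 := by
  simp [normalForm]

theorem apply_neg_two_div (hμ : μ ≠ 0) (ht : t ≠ 0) : normalForm μ t (-2 / t) = 0 :=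
  (eq_zero_iff hμ).2 (Or.inr (by rw [mul_div_cancel₀ _ ht, neg_add_cancel]))

theorem apply_neg_two_div_add (hμ : μ ≠ 0) (hμt : μ + t ≠ 0) :
    normalForm μ t (-2 / (μ + t)) = -1 :=
  (eq_neg_one_iff hμ).2 (by rw [mul_div_cancel₀ _ hμt, neg_add_cancel])

theorem surjOn_uIcc (hμ : μ ≠ 0) {a b : ℝ} (ha : normalForm μ t a = -1)
    (hb : normalForm μ t b = 0) : SurjOn (normalForm μ t) (uIcc a b) (Icc (-1) 0) := by
  have ivt := intermediate_value_uIcc (a := a) (b := b) (normalForm.continuous hμ t).continuousOn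
  rwa [ha, hb, uIcc_of_le (by norm_num)] at ivt

end normalForm

/-- For `μ > 0` and `t > 2`, the interval `[−1,0]` is doubly covered by the subinterval
`[−2/t, 0]` of itself under the normal form `f_{μ,t}`. -/
theorem double_covering_above_line (μ t : ℝ) (hμ : 0 < μ) (ht : 2 < t) :
    let f : ℝ → ℝ := fun x => 2 * μ * x * (t * x + 2) / (μ ^ 2 * x ^ 2 + (t * x + 2) ^ 2)
    (-1 ≤ -2 / t ∧ -2 / t < -2 / (μ + t) ∧ -2 / (μ + t) < 0) ∧
    f (-2 / t) = 0 ∧ f (-2 / (μ + t)) = -1 ∧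
    ∀ y ∈ Set.Icc (-1 : ℝ) 0,
      (∃ x₁ ∈ Set.Icc (-2 / t) (-2 / (μ + t)), f x₁ = y) ∧
      (∃ x₂ ∈ Set.Icc (-2 / (μ + t)) (0 : ℝ), f x₂ = y) := by
  have ht₀ : 0 < t := two_pos.trans ht
  have hμt : 0 < μ + t := add_pos hμ ht₀
  have neg_one_le_root : -1 ≤ -2 / t := by rw [le_div_iff₀ ht₀]; linarith
  have root_lt_crit : -2 / t < -2 / (μ + t) := by rw [div_lt_div_iff₀ ht₀ hμt]; linarith
  have crit_neg : -2 / (μ + t) < 0 := div_neg_of_neg_of_pos (by norm_num) hμt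
  have value_root := normalForm.apply_neg_two_div hμ.ne' ht₀.ne'
  have value_crit := normalForm.apply_neg_two_div_add hμ.ne' hμt.ne'
  have cover_left := normalForm.surjOn_uIcc hμ.ne' value_crit value_root
  have cover_right := normalForm.surjOn_uIcc hμ.ne' value_crit (normalForm.apply_zero μ t)
  rw [uIcc_of_ge root_lt_crit.le] at cover_left
  rw [uIcc_of_le crit_neg.le] at cover_right
  exact ⟨⟨neg_one_le_root, root_lt_crit, crit_neg⟩, value_root, value_crit,
    fun _ hy => ⟨cover_left hy, cover_right hy⟩⟩
end

section
/- For real parameters μ > 0 and t > 2, define f_{μ,t} : ℝ → ℝ by f_{μ,t}(x) = 2μx(tx+2)/(μ²x² + (tx+2)²); it maps the interval [−1,1] into itself. Then the topological entropy of the induced self-map of [−1,1] equals log 2. -/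
/-!
The upper bound is the Misiurewicz–Szlenk estimate. The sum of the variations over `(-∞, x]` of
the iterates `f^[k]`, `k < n`, controls the distance between orbits of length `n`, so cutting its
range into pieces of length `ε` gives a dynamical cover. Every point has at most two preimages
under `f = f_{μ,t}`, so a value of `f^[k]` is taken at most `2 ^ k` times, and Banach's indicatrix
bounds the variation of `f^[k]` on `[-1, 1]` by `2 * 2 ^ k`.

The lower bound comes from a horseshoe. For `t > 2` the interval `[-2 / t, 0]` lies in `[-1, 1]`,
its endpoints are zeros of `f`, and in between `f` reaches `-1 < -2 / t`. So two disjoint closed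
subintervals are each mapped onto `[-2 / t, 0]`, and every word in two letters is the itinerary of
some point.
-/

open Set MeasureTheory ExpGrowth Dynamics
open scoped ENNReal NNReal Uniformity

lemma exists_finset_card_le_floor_div {α : Type*} {s : Set α} {V : α → ℝ≥0} {M ε : ℝ≥0}
    (hε : 0 < ε) (hV : ∀ x ∈ s, V x ≤ M) :
    ∃ t : Finset α, ↑t ⊆ s ∧ t.card ≤ ⌊M / ε⌋₊ + 1 ∧
      ∀ x ∈ s, ∃ y ∈ t, V x < V y + ε ∧ V y < V x + ε := by
  obtain ⟨t, hts, ht⟩ := exists_subset_bijOn s fun x ↦ ⌊V x / ε⌋₊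
  have himage : (fun x ↦ ⌊V x / ε⌋₊) '' s ⊆ Finset.range (⌊M / ε⌋₊ + 1) := by
    rintro _ ⟨x, hx, rfl⟩
    rw [Finset.coe_range, mem_Iio, Nat.lt_succ_iff]
    exact Nat.floor_le_floor (by gcongr; exact hV x hx)
  have htmaps : MapsTo (fun x ↦ ⌊V x / ε⌋₊) t (Finset.range (⌊M / ε⌋₊ + 1)) :=
    ht.mapsTo.mono_right himage
  lift t to Finset α using Finite.of_injOn htmaps ht.injOn (Finset.finite_toSet _)
  refine ⟨t, hts, ?_, fun x hx ↦ ?_⟩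
  · simpa only [Finset.card_range] using Finset.card_le_card_of_injOn _ htmaps ht.injOn
  · obtain ⟨y, hy, hyx⟩ := ht.surjOn (mem_image_of_mem _ hx)
    have lt_add {a b : ℝ≥0} (h : ⌊a / ε⌋₊ = ⌊b / ε⌋₊) : a < b + ε := by
      have : a / ε < b / ε + 1 :=
        (Nat.lt_floor_add_one _).trans_le (by rw [h]; gcongr; exact Nat.floor_le zero_le)
      rwa [div_lt_iff₀ hε, add_mul, one_mul, div_mul_cancel₀ _ hε.ne'] at this
    exact ⟨y, hy, lt_add hyx.symm, lt_add hyx⟩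

section Variation

variable {α : Type*} [LinearOrder α]

lemma eVariationOn_inter_Iic_add_edist_le {E : Type*} [PseudoEMetricSpace E] (g : α → E)
    {s : Set α} {x y : α} (hx : x ∈ s) (hy : y ∈ s) (hxy : x ≤ y) :
    eVariationOn g (s ∩ Iic x) + edist (g x) (g y) ≤ eVariationOn g (s ∩ Iic y) := calc
  eVariationOn g (s ∩ Iic x) + edist (g x) (g y)
      ≤ eVariationOn g (s ∩ Iic x) + eVariationOn g (s ∩ Icc x y) := by
    gcongr
    exact eVariationOn.edist_le g ⟨hx, left_mem_Icc.2 hxy⟩ ⟨hy, right_mem_Icc.2 hxy⟩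
  _ ≤ eVariationOn g (s ∩ Iic x ∪ s ∩ Icc x y) :=
    eVariationOn.add_le_union g fun _ hu _ hv ↦ hu.2.trans hv.2.1
  _ ≤ eVariationOn g (s ∩ Iic y) := by
    rw [← inter_union_distrib_left]
    refine eVariationOn.mono g (inter_subset_inter_right s ?_)
    exact union_subset (Iic_subset_Iic.2 hxy) Icc_subset_Iic_self

variable [PseudoEMetricSpace α]

lemma sum_eVariationOn_inter_Iic_add_edist_iterate_le (f : α → α) {s : Set α} {n k : ℕ}
    (hk : k < n) {x y : α} (hx : x ∈ s) (hy : y ∈ s) (hxy : x ≤ y) :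
    (∑ j ∈ Finset.range n, eVariationOn f^[j] (s ∩ Iic x)) + edist (f^[k] x) (f^[k] y) ≤
      ∑ j ∈ Finset.range n, eVariationOn f^[j] (s ∩ Iic y) := calc
  _ ≤ (∑ j ∈ Finset.range n, eVariationOn f^[j] (s ∩ Iic x)) +
      ∑ j ∈ Finset.range n, edist (f^[j] x) (f^[j] y) := by
    gcongr
    exact Finset.single_le_sum (f := fun j ↦ edist (f^[j] x) (f^[j] y))
      (fun _ _ ↦ zero_le) (Finset.mem_range.2 hk)
  _ ≤ _ := by
    rw [← Finset.sum_add_distrib]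
    exact Finset.sum_le_sum fun j _ ↦ eVariationOn_inter_Iic_add_edist_le _ hx hy hxy

lemma coverMincard_le_sum_eVariationOn_div_add_one (f : α → α) (s : Set α) {ε : ℝ≥0}
    (hε : 0 < ε) (n : ℕ) :
    (coverMincard f s {p | edist p.1 p.2 < ε} n : ℝ≥0∞) ≤
      (∑ k ∈ Finset.range n, eVariationOn f^[k] s) / ε + 1 := by
  set V : α → ℝ≥0∞ := fun x ↦ ∑ k ∈ Finset.range n, eVariationOn f^[k] (s ∩ Iic x)
  have V_le (x : α) : V x ≤ ∑ k ∈ Finset.range n, eVariationOn f^[k] s :=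
    Finset.sum_le_sum fun k _ ↦ eVariationOn.mono _ inter_subset_left
  rcases eq_or_ne (∑ k ∈ Finset.range n, eVariationOn f^[k] s) ∞ with hM | hM
  · simp [hM, ENNReal.top_div_coe]
  have edist_lt {x y : α} {k : ℕ} (hk : k < n) (hx : x ∈ s) (hy : y ∈ s) (hxy : x ≤ y)
      (h : V y < V x + ε) : edist (f^[k] x) (f^[k] y) < ε :=
    (ENNReal.add_lt_add_iff_left (ne_top_of_le_ne_top hM (V_le x))).1
      ((sum_eVariationOn_inter_Iic_add_edist_iterate_le f hk hx hy hxy).trans_lt h)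
  clear_value V
  lift V to α → ℝ≥0 using fun x ↦ ne_top_of_le_ne_top hM (V_le x)
  lift (∑ k ∈ Finset.range n, eVariationOn f^[k] s) to ℝ≥0 using hM with M
  obtain ⟨t, hts, htcard, ht⟩ := exists_finset_card_le_floor_div hε fun x (_ : x ∈ s) ↦
    ENNReal.coe_le_coe.1 (V_le x)
  have hcover : IsDynCoverOf f s {p | edist p.1 p.2 < ε} n t := by
    intro x hx
    obtain ⟨y, hy, hxy, hyx⟩ := ht x hx
    refine ⟨y, hy, mem_dynEntourage.2 fun k hk ↦ ?_⟩
    rcases le_total x y with h | h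
    · exact edist_lt hk hx (hts hy) h (mod_cast hyx)
    · exact (edist_comm _ _).trans_lt (edist_lt hk (hts hy) hx h (mod_cast hxy))
  calc
    (coverMincard f s {p | edist p.1 p.2 < ε} n : ℝ≥0∞) ≤ (t.card : ℕ∞) :=
      ENat.toENNReal_mono hcover.coverMincard_le_card
    _ ≤ ((M / ε + 1 : ℝ≥0) : ℝ≥0∞) := by
      rw [ENat.toENNReal_coe, ← ENNReal.coe_natCast, ENNReal.coe_le_coe]
      grw [htcard, Nat.cast_add_one, Nat.floor_le zero_le]
    _ = M / ε + 1 := by rw [ENNReal.coe_add, ENNReal.coe_div hε.ne', ENNReal.coe_one]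

theorem coverEntropy_le_expGrowthSup_sum_eVariationOn (f : α → α) (s : Set α) :
    coverEntropy f s ≤
      expGrowthSup fun n ↦ (∑ k ∈ Finset.range n, eVariationOn f^[k] s) + 1 := by
  rw [coverEntropy_eq_iSup_basis uniformity_basis_edist_nnreal]
  refine iSup₂_le fun ε hε ↦ expGrowthSup_le_of_eventually_le (b := (ε : ℝ≥0∞)⁻¹ + 1)
    (by simp [hε.ne']) (.of_forall fun n ↦ ?_)
  grw [coverMincard_le_sum_eVariationOn_div_add_one f s hε n, div_eq_mul_inv, mul_comm,
    mul_add_one, add_mul]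
  gcongr
  · exact le_self_add
  · exact le_add_self

end Variation

section IntermediateValue

variable {α δ : Type*} [ConditionallyCompleteLinearOrder α] [TopologicalSpace α] [OrderTopology α]
  [DenselyOrdered α] [LinearOrder δ] [TopologicalSpace δ] [OrderClosedTopology δ]

lemma intermediate_value_uIoo {a b : α} {g : α → δ} (hg : ContinuousOn g (uIcc a b)) :
    uIoo (g a) (g b) ⊆ g '' uIoo a b := by
  wlog hab : a ≤ b generalizing a b
  · rw [uIoo_comm a, uIoo_comm (g a)]
    exact this (uIcc_comm a b ▸ hg) (le_of_not_ge hab)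
  rw [uIcc_of_le hab] at hg
  rw [uIoo_eq_union, uIoo_of_le hab]
  exact union_subset (intermediate_value_Ioo hab hg) (intermediate_value_Ioo' hab hg)

lemma encard_setOf_mem_uIoo_le_encard_fiber {g : α → δ} {s : Set α} [hs : s.OrdConnected]
    (hg : ContinuousOn g s) {u : ℕ → α} (hu : Monotone u) (hus : ∀ i, u i ∈ s) (y : δ) :
    {i | y ∈ uIoo (g (u i)) (g (u (i + 1)))}.encard ≤ (s ∩ g ⁻¹' {y}).encard := by
  have exists_fiber_mem (i : ℕ) (hi : y ∈ uIoo (g (u i)) (g (u (i + 1)))) :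
      ∃ x ∈ Ioo (u i) (u (i + 1)), g x = y := by
    rw [← uIoo_of_le (hu i.le_succ)]
    exact intermediate_value_uIoo (hg.mono (hs.uIcc_subset (hus i) (hus (i + 1)))) hi
  choose! x hx hxy using exists_fiber_mem
  refine encard_le_encard_of_injOn (f := x) (fun i hi ↦ ⟨?_, hxy i hi⟩) fun i hi j hj hij ↦ ?_
  · exact hs.out (hus i) (hus (i + 1)) (Ioo_subset_Icc_self (hx i hi))
  · by_contra hne
    exact disjoint_left.1 (hu.pairwise_disjoint_on_Ioo_succ hne) (hx i hi) (hij ▸ hx j hj)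

theorem eVariationOn_le_lintegral_encard_fiber {g : α → ℝ} {s : Set α} [s.OrdConnected]
    (hg : ContinuousOn g s) : eVariationOn g s ≤ ∫⁻ y, (s ∩ g ⁻¹' {y}).encard := by
  refine iSup_le fun ⟨n, u, hu, hus⟩ ↦ ?_
  let I (i : ℕ) : Set ℝ := uIoo (g (u i)) (g (u (i + 1)))
  have hI (i : ℕ) : MeasurableSet (I i) := measurableSet_Ioo
  calc ∑ i ∈ Finset.range n, edist (g (u (i + 1))) (g (u i))
      = ∑ i ∈ Finset.range n, ∫⁻ y, (I i).indicator 1 y := by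
        refine Finset.sum_congr rfl fun i _ ↦ ?_
        rw [lintegral_indicator_one (hI i), Real.volume_uIoo, edist_dist, Real.dist_eq]
    _ = ∫⁻ y, ∑ i ∈ Finset.range n, (I i).indicator 1 y :=
        (lintegral_finsetSum _ fun i _ ↦ measurable_one.indicator (hI i)).symm
    _ ≤ ∫⁻ y, (s ∩ g ⁻¹' {y}).encard := lintegral_mono fun y ↦ ?_
  classical
  calc ∑ i ∈ Finset.range n, (I i).indicator 1 y
      = ((({i ∈ Finset.range n | y ∈ I i} : Finset ℕ) : Set ℕ).encard : ℝ≥0∞) := by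
        simp only [indicator_apply, Pi.one_apply, Finset.sum_boole, encard_coe_eq_coe_finsetCard,
          ENat.toENNReal_coe]
    _ ≤ ({i | y ∈ I i}.encard : ℝ≥0∞) := by
        exact ENat.toENNReal_mono (encard_le_encard fun i hi ↦ (Finset.mem_filter.1 hi).2)
    _ ≤ (s ∩ g ⁻¹' {y}).encard :=
        ENat.toENNReal_mono (encard_setOf_mem_uIoo_le_encard_fiber hg hu hus y)

lemma eVariationOn_le_mul_volume {g : α → ℝ} {s : Set α} {t : Set ℝ} [s.OrdConnected]
    (hg : ContinuousOn g s) (hst : MapsTo g s t) {N : ℕ}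
    (hN : ∀ y, (s ∩ g ⁻¹' {y}).encard ≤ N) :
    eVariationOn g s ≤ N * volume t := calc
  eVariationOn g s ≤ ∫⁻ y, (s ∩ g ⁻¹' {y}).encard := eVariationOn_le_lintegral_encard_fiber hg
  _ ≤ ∫⁻ y, t.indicator (fun _ ↦ (N : ℝ≥0∞)) y := by
    refine lintegral_mono fun y ↦ ?_
    by_cases hy : y ∈ t
    · rw [indicator_of_mem hy, ← ENat.toENNReal_coe]
      exact ENat.toENNReal_mono (hN y)
    · have : s ∩ g ⁻¹' {y} = ∅ :=
        eq_empty_of_forall_notMem fun x hx ↦ hy (hx.2 ▸ hst hx.1)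
      simp only [this, encard_empty, ENat.toENNReal_zero, zero_le]
  _ ≤ N * volume t := lintegral_indicator_const_le t N

end IntermediateValue

lemma encard_fiber_iterate_le {α : Type*} {f : α → α} {s : Set α} (hs : MapsTo f s s) {N : ℕ}
    (hN : ∀ y, (s ∩ f ⁻¹' {y}).encard ≤ N) (k : ℕ) (y : α) :
    (s ∩ f^[k] ⁻¹' {y}).encard ≤ (N ^ k : ℕ) := by
  induction k with
  | zero =>
    grw [inter_subset_right, Function.iterate_zero, preimage_id, encard_singleton]
    simp
  | succ k ih =>
    have hfin : (s ∩ f^[k] ⁻¹' {y}).Finite := finite_of_encard_le_coe ih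
    calc (s ∩ f^[k + 1] ⁻¹' {y}).encard
        ≤ (⋃ z ∈ hfin.toFinset, s ∩ f ⁻¹' {z}).encard := by
          refine encard_le_encard fun x hx ↦ mem_biUnion (x := f x) ?_ ⟨hx.1, rfl⟩
          exact hfin.mem_toFinset.2 ⟨hs hx.1, hx.2⟩
      _ ≤ ∑ z ∈ hfin.toFinset, (s ∩ f ⁻¹' {z}).encard := Finset.set_encard_biUnion_le _ _
      _ ≤ hfin.toFinset.card • (N : ℕ∞) := Finset.sum_le_card_nsmul _ _ _ fun z _ ↦ hN z
      _ ≤ (N ^ (k + 1) : ℕ) := by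
          rw [hfin.encard_eq_coe_toFinset_card, Nat.cast_le] at ih
          rw [nsmul_eq_mul, pow_succ]
          exact_mod_cast Nat.mul_le_mul_right N ih

theorem coverEntropy_le_log_of_encard_fiber_le {f : ℝ → ℝ} {s : Set ℝ} [s.OrdConnected]
    (hs : volume s ≠ ∞) (hf : ContinuousOn f s) (hfs : MapsTo f s s) {N : ℕ} (hN : 2 ≤ N)
    (hfiber : ∀ y, (s ∩ f ⁻¹' {y}).encard ≤ N) : coverEntropy f s ≤ ENNReal.log N := by
  have hvar (k : ℕ) : eVariationOn f^[k] s ≤ (N ^ k : ℕ) * volume s :=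
    eVariationOn_le_mul_volume (hf.iterate hfs k) (hfs.iterate k)
      (encard_fiber_iterate_le hfs hfiber k)
  rw [← expGrowthSup_pow]
  refine (coverEntropy_le_expGrowthSup_sum_eVariationOn f s).trans
    (expGrowthSup_le_of_eventually_le (b := volume s + 1) (by simp [hs]) (.of_forall fun n ↦ ?_))
  calc (∑ k ∈ Finset.range n, eVariationOn f^[k] s) + 1
      ≤ (∑ k ∈ Finset.range n, (N ^ k : ℕ) * volume s) + 1 := by gcongr; exact hvar _
    _ = (∑ k ∈ Finset.range n, N ^ k : ℕ) * volume s + 1 := by rw [← Finset.sum_mul, Nat.cast_sum]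
    _ ≤ (N ^ n : ℕ) * volume s + (N ^ n : ℕ) := by
        gcongr
        · exact (Nat.geomSum_lt hN fun k hk ↦ Finset.mem_range.1 hk).le
        · exact_mod_cast Nat.one_le_pow _ _ (by lia)
    _ = (volume s + 1) * N ^ n := by push_cast; ring

section Horseshoe

variable {X ι : Type*} {f : X → X} {J : Set X} {K : ι → Set X}

lemma exists_mem_forall_iterate_mem (hJ : J.Nonempty) (hKJ : ∀ i, K i ⊆ J)
    (hf : ∀ i, SurjOn f (K i) J) {n : ℕ} (w : Fin n → ι) :
    ∃ x ∈ J, ∀ k : Fin n, f^[k] x ∈ K (w k) := by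
  induction n with
  | zero => exact hJ.imp fun x hx ↦ ⟨hx, fun k ↦ k.elim0⟩
  | succ n ih =>
    obtain ⟨y, hyJ, hy⟩ := ih (Fin.tail w)
    obtain ⟨x, hx, rfl⟩ := hf (w 0) hyJ
    exact ⟨x, hKJ _ hx, Fin.forall_fin_succ.2 ⟨hx, hy⟩⟩

lemma isDynNetIn_of_comp_subset {U V : SetRel X X} [U.IsSymm] (hUV : U.comp U ⊆ V) {S : Set X}
    {n : ℕ} (hSJ : S ⊆ J) (hS : S.Pairwise fun x y ↦ (x, y) ∉ dynEntourage f V n) :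
    IsDynNetIn f J U n S := by
  refine ⟨hSJ, fun x hx y hy hxy ↦ disjoint_left.2 fun z hxz hyz ↦ hS hx hy hxy ?_⟩
  exact mem_dynEntourage.2 fun k hk ↦ hUV <| SetRel.prodMk_mem_comp
    (mem_ball_dynEntourage.1 hxz k hk) (U.symm (mem_ball_dynEntourage.1 hyz k hk))

theorem log_card_le_coverEntropy [UniformSpace X] [Fintype ι] {V : SetRel X X} (hV : V ∈ 𝓤 X)
    (hJ : J.Nonempty) (hKJ : ∀ i, K i ⊆ J) (hf : ∀ i, SurjOn f (K i) J)
    (hsep : Pairwise fun i j ↦ ∀ x ∈ K i, ∀ y ∈ K j, (x, y) ∉ V) :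
    ENNReal.log (Fintype.card ι) ≤ coverEntropy f J := by
  obtain ⟨U, hU, hUsymm, hUV⟩ := comp_symm_mem_uniformity_sets hV
  refine le_trans ?_ (netEntropyEntourage_le_coverEntropy f J hU)
  rw [← expGrowthSup_pow]
  refine expGrowthSup_monotone fun n ↦ ?_
  choose x hxJ hx using exists_mem_forall_iterate_mem hJ hKJ hf (n := n)
  have hxsep : Pairwise fun v w ↦ (x v, x w) ∉ dynEntourage f V n := fun v w hvw h ↦
    have ⟨k, hk⟩ := Function.ne_iff.1 hvw
    hsep hk _ (hx v k) _ (hx w k) (mem_dynEntourage.1 h k k.2)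
  have hxinj : x.Injective := fun v w hvw ↦ by
    by_contra hne
    exact hxsep hne (mem_dynEntourage.2 fun k _ ↦ hvw ▸ refl_mem_uniformity hV)
  have hnet : IsDynNetIn f J U n (Finset.univ.map ⟨x, hxinj⟩ : Finset X) := by
    rw [Finset.coe_map, Finset.coe_univ, image_univ]
    exact isDynNetIn_of_comp_subset hUV (range_subset_iff.2 hxJ)
      (Pairwise.range_pairwise hxsep)
  simpa using ENat.toENNReal_mono hnet.card_le_netMaxcard

theorem log_two_le_coverEntropy_Icc {f : ℝ → ℝ} {a b c : ℝ} (hf : ContinuousOn f (Icc a b))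
    (hc : c ∈ Icc a b) (hfa : b ≤ f a) (hfb : b ≤ f b) (hfc : f c < a) :
    ENNReal.log 2 ≤ coverEntropy f (Icc a b) := by
  have hab : a ≤ b := hc.1.trans hc.2
  have hf_left : ContinuousOn f (Icc a c) := hf.mono (Icc_subset_Icc_right hc.2)
  have hf_right : ContinuousOn f (Icc c b) := hf.mono (Icc_subset_Icc_left hc.1)
  obtain ⟨p, hp, hfp⟩ := intermediate_value_Icc' hc.1 hf_left ⟨hfc.le, hab.trans hfa⟩
  obtain ⟨q, hq, hfq⟩ := intermediate_value_Icc hc.2 hf_right ⟨hfc.le, hab.trans hfb⟩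
  have hpc : p ≠ c := by rintro rfl; exact hfc.ne hfp
  have hpq : p < q := (hp.2.lt_of_ne hpc).trans_le hq.1
  let K (i : Bool) : Set ℝ := if i then Icc q b else Icc a p
  have hKJ (i : Bool) : K i ⊆ Icc a b := by
    cases i
    · exact Icc_subset_Icc_right (hp.2.trans hc.2)
    · exact Icc_subset_Icc_left (hc.1.trans hq.1)
  have hsurj (i : Bool) : SurjOn f (K i) (Icc a b) := by
    cases i
    · calc Icc a b ⊆ Icc (f p) (f a) := Icc_subset_Icc hfp.le hfa
        _ ⊆ f '' Icc a p := intermediate_value_Icc' hp.1 (hf_left.mono (Icc_subset_Icc_right hp.2))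
    · calc Icc a b ⊆ Icc (f q) (f b) := Icc_subset_Icc hfq.le hfb
        _ ⊆ f '' Icc q b := intermediate_value_Icc hq.2 (hf_right.mono (Icc_subset_Icc_left hq.1))
  have hsep : Pairwise fun i j ↦ ∀ x ∈ K i, ∀ y ∈ K j,
      (x, y) ∉ {r : ℝ × ℝ | dist r.1 r.2 < q - p} := by
    have hfar {x y : ℝ} (hx : x ∈ K false) (hy : y ∈ K true) : q - p ≤ dist x y := by
      rw [dist_comm]
      exact (sub_le_sub hy.1 hx.2).trans (le_abs_self _)
    rintro (_ | _) (_ | _) hij x hx y hy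
    · exact absurd rfl hij
    · exact (hfar hx hy).not_gt
    · exact (dist_comm x y ▸ hfar hy hx).not_gt
    · exact absurd rfl hij
  exact_mod_cast log_card_le_coverEntropy (Metric.dist_mem_uniformity (sub_pos.2 hpq))
    (nonempty_Icc.2 hab) hKJ hsurj hsep

end Horseshoe

lemma encard_setOf_quadratic_eq_zero_le_two {R : Type*} [CommRing R] [IsDomain R] {a b c : R}
    (h : ¬(a = 0 ∧ b = 0 ∧ c = 0)) : {x | a * x ^ 2 + b * x + c = 0}.encard ≤ 2 := by
  classical
  let p : Polynomial R := .C a * .X ^ 2 + .C b * .X + .C c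
  have hp : p ≠ 0 := by
    contrapose! h
    have hcoeff (n : ℕ) : p.coeff n = 0 := by rw [h, Polynomial.coeff_zero]
    exact ⟨by simpa [p, Polynomial.coeff_X, Polynomial.coeff_C] using hcoeff 2,
      by simpa [p, Polynomial.coeff_X, Polynomial.coeff_C] using hcoeff 1,
      by simpa [p] using hcoeff 0⟩
  have hroots : {x | a * x ^ 2 + b * x + c = 0} = p.roots.toFinset := by
    ext x
    simp [p, hp]
  rw [hroots, encard_coe_eq_coe_finsetCard]
  exact_mod_cast p.roots.toFinset_card_le.trans <| p.card_roots'.trans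
    Polynomial.natDegree_quadratic_le

/-- The normal form `f_{μ,t}`, as a map on all of `ℝ`. The denominator vanishes only at `μ = 0`,
`x = -2 / t`, where the value is then `0`. -/
noncomputable def normalFormMap (μ t x : ℝ) : ℝ :=
  2 * μ * x * (t * x + 2) / (μ ^ 2 * x ^ 2 + (t * x + 2) ^ 2)

section NormalForm

variable {μ t : ℝ}

lemma normalFormMap_denom_pos (hμ : μ ≠ 0) (t x : ℝ) :
    0 < μ ^ 2 * x ^ 2 + (t * x + 2) ^ 2 := by
  rcases eq_or_ne x 0 with rfl | hx
  · norm_num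
  · positivity

lemma abs_normalFormMap_le_one (μ t x : ℝ) : |normalFormMap μ t x| ≤ 1 := by
  rw [normalFormMap, abs_div, abs_of_nonneg (by positivity : 0 ≤ μ ^ 2 * x ^ 2 + (t * x + 2) ^ 2)]
  refine div_le_one_of_le₀ ?_ (by positivity)
  simpa [mul_assoc, mul_pow, abs_mul] using two_mul_le_add_sq |μ * x| |t * x + 2|

lemma continuous_normalFormMap (hμ : μ ≠ 0) (t : ℝ) : Continuous (normalFormMap μ t) :=
  .div (by fun_prop) (by fun_prop) fun x ↦ (normalFormMap_denom_pos hμ t x).ne'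

lemma encard_normalFormMap_fiber_le_two (hμ : μ ≠ 0) (t y : ℝ) :
    (normalFormMap μ t ⁻¹' {y}).encard ≤ 2 := by
  have hcoeff : ¬(y * (μ ^ 2 + t ^ 2) - 2 * μ * t = 0 ∧ 4 * (t * y - μ) = 0 ∧ 4 * y = 0) := by
    rintro ⟨-, hb, hc⟩
    exact hμ (by linear_combination (t * hc - hb) / 4)
  refine le_trans (encard_le_encard fun x hx ↦ ?_) (encard_setOf_quadratic_eq_zero_le_two hcoeff)
  rw [mem_preimage, mem_singleton_iff, normalFormMap,
    div_eq_iff (normalFormMap_denom_pos hμ t x).ne'] at hx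
  rw [mem_ofPred_eq]
  linear_combination -hx

lemma normalFormMap_zero (μ t : ℝ) : normalFormMap μ t 0 = 0 := by simp [normalFormMap]

lemma normalFormMap_neg_two_div (μ : ℝ) (ht : t ≠ 0) : normalFormMap μ t (-2 / t) = 0 := by
  simp [normalFormMap, mul_div_cancel₀, ht]

lemma normalFormMap_neg_two_div_add (hμ : μ ≠ 0) (ht : t + μ ≠ 0) :
    normalFormMap μ t (-2 / (t + μ)) = -1 := by
  rw [normalFormMap, div_eq_iff (normalFormMap_denom_pos hμ t _).ne']
  field_simp
  ring

lemma log_two_le_coverEntropy_normalFormMap (hμ : 0 < μ) (ht : 2 < t) :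
    ENNReal.log 2 ≤ coverEntropy (normalFormMap μ t) (Icc (-2 / t) 0) := by
  have ht₀ : 0 < t := zero_lt_two.trans ht
  refine log_two_le_coverEntropy_Icc (c := -2 / (t + μ))
    (continuous_normalFormMap hμ.ne' t).continuousOn ⟨?_, ?_⟩
    (normalFormMap_neg_two_div μ ht₀.ne').ge (normalFormMap_zero μ t).ge ?_
  · rw [neg_div, neg_div, neg_le_neg_iff]
    gcongr
    exact le_add_of_nonneg_right hμ.le
  · exact div_nonpos_of_nonpos_of_nonneg (by norm_num) (by positivity)
  · rw [normalFormMap_neg_two_div_add hμ.ne' (by positivity), lt_div_iff₀ ht₀]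
    linarith

end NormalForm

/-- Observation 4.h: for `μ > 0` and `t > 2`, the normal-form map `f_{μ,t}` preserves
`[−1,1]` and the topological entropy of the induced self-map of `[−1,1]` is `log 2`. -/
theorem entropy_log_two_above_line (μ t : ℝ) (hμ : 0 < μ) (ht : 2 < t) :
    ∃ hmaps : Set.MapsTo
        (fun x : ℝ => 2 * μ * x * (t * x + 2) / (μ ^ 2 * x ^ 2 + (t * x + 2) ^ 2))
        (Set.Icc (-1 : ℝ) 1) (Set.Icc (-1 : ℝ) 1),
      Dynamics.coverEntropy (Set.MapsTo.restrict _ _ _ hmaps) Set.univ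
        = (Real.log 2 : EReal) := by
  have hmaps : MapsTo (normalFormMap μ t) (Icc (-1) 1) (Icc (-1) 1) :=
    fun x _ ↦ abs_le.1 (abs_normalFormMap_le_one μ t x)
  refine ⟨hmaps, (coverEntropy_restrict hmaps).trans ?_⟩
  have hlog : ENNReal.log 2 = (Real.log 2 : EReal) := by
    simpa using ENNReal.log_ofReal_of_pos zero_lt_two
  rw [← hlog]
  apply le_antisymm
  · exact coverEntropy_le_log_of_encard_fiber_le measure_Icc_lt_top.ne
      (continuous_normalFormMap hμ.ne' t).continuousOn hmaps le_rfl
      fun y ↦ (encard_le_encard inter_subset_right).trans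
        (encard_normalFormMap_fiber_le_two hμ.ne' t y)
  · have ht' : -1 ≤ -2 / t := by rw [le_div_iff₀ (by linarith)]; linarith
    exact (log_two_le_coverEntropy_normalFormMap hμ ht).trans
      (coverEntropy_monotone _ (Icc_subset_Icc ht' zero_le_one))
end

section
/- For real parameters μ < −4 and t < 0 with t²/4 + μ − 1 > 0 (the parameter lies outside the parabola μ = 1 − t²/4), define f_{μ,t} : ℝ → ℝ by f_{μ,t}(x) = 2μx(tx+2)/(μ²x² + (tx+2)²). Then there exists a real number c with 0 < c, f_{μ,t}(c) = c, and c < f_{μ,t}(−1) = 2μ(t−2)/(μ² + (t−2)²). -/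
/-!
The nonzero fixed points of `f_{μ,t}` are the roots of a quadratic, and the smaller of two positive
roots lies below their harmonic mean. That mean, `4(1 - μ) / (t(μ - 2))`, involves no square root,
and outside the parabola it lies below `f_{μ,t}(-1)` as soon as `μ ≤ -3`.
-/

open Function

theorem exists_pos_quadratic_root_lt_harmonic_mean {a b c : ℝ} (hb : b < 0) (hc : 0 < c)
    (hdiscrim : 0 < discrim a b c) :
    ∃ x, 0 < x ∧ x < 2 * c / -b ∧ a * (x * x) + b * x + c = 0 := by
  have hsqrt : 0 < √(discrim a b c) := Real.sqrt_pos.2 hdiscrim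
  have hsq : √(discrim a b c) ^ 2 = b ^ 2 - 4 * a * c := Real.sq_sqrt hdiscrim.le
  have hden : 0 < -b + √(discrim a b c) := by linarith
  -- The rationalised quadratic formula, which also covers `a ≤ 0`.
  refine ⟨2 * c / (-b + √(discrim a b c)), by positivity, ?_, ?_⟩
  · exact div_lt_div_of_pos_left (by positivity) (by linarith) (by linarith)
  · field_simp
    linear_combination c * hsq

/-- The map `f_{μ,t}` of the paper. -/
noncomputable def paramMap (μ t x : ℝ) : ℝ :=
  2 * μ * x * (t * x + 2) / (μ ^ 2 * x ^ 2 + (t * x + 2) ^ 2)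

namespace paramMap

variable {μ t x : ℝ}

theorem neg_one (μ t : ℝ) :
    paramMap μ t (-1) = 2 * μ * (t - 2) / (μ ^ 2 + (t - 2) ^ 2) := by
  unfold paramMap
  congr 1 <;> ring

theorem isFixedPt_iff_quadratic_eq_zero (hμ : μ ≠ 0) (hx : x ≠ 0) :
    IsFixedPt (paramMap μ t) x ↔
      (μ ^ 2 + t ^ 2) * (x * x) + (4 * t - 2 * μ * t) * x + 4 * (1 - μ) = 0 := by
  have hden : μ ^ 2 * x ^ 2 + (t * x + 2) ^ 2 ≠ 0 := by positivity
  have hfactor : x * (μ ^ 2 * x ^ 2 + (t * x + 2) ^ 2) - 2 * μ * x * (t * x + 2) =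
      x * ((μ ^ 2 + t ^ 2) * (x * x) + (4 * t - 2 * μ * t) * x + 4 * (1 - μ)) := by ring
  rw [IsFixedPt, paramMap, div_eq_iff hden, eq_comm, ← sub_eq_zero, hfactor,
    mul_eq_zero_iff_left hx]

theorem discrim_fixedPt_quadratic (μ t : ℝ) :
    discrim (μ ^ 2 + t ^ 2) (4 * t - 2 * μ * t) (4 * (1 - μ)) =
      16 * μ ^ 2 * (t ^ 2 / 4 + μ - 1) := by
  unfold discrim
  ring

theorem exists_pos_isFixedPt_lt_harmonic_mean (hμ₀ : μ ≠ 0) (hμ₁ : μ < 1) (ht : t < 0)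
    (hpar : 0 < t ^ 2 / 4 + μ - 1) :
    ∃ c, 0 < c ∧ IsFixedPt (paramMap μ t) c ∧ c < 4 * (1 - μ) / (t * (μ - 2)) := by
  have hlinear : 4 * t - 2 * μ * t < 0 := by nlinarith
  have hconst : 0 < 4 * (1 - μ) := by linarith
  have hdiscrim : 0 < discrim (μ ^ 2 + t ^ 2) (4 * t - 2 * μ * t) (4 * (1 - μ)) := by
    rw [discrim_fixedPt_quadratic]
    positivity
  obtain ⟨c, hc, hlt, hroot⟩ := exists_pos_quadratic_root_lt_harmonic_mean hlinear hconst hdiscrim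
  have hmean : 2 * (4 * (1 - μ)) / -(4 * t - 2 * μ * t) = 4 * (1 - μ) / (t * (μ - 2)) := by
    rw [← mul_div_mul_left (4 * (1 - μ)) (t * (μ - 2)) two_ne_zero]
    congr 1
    ring
  exact ⟨c, hc, (isFixedPt_iff_quadratic_eq_zero hμ₀ hc.ne').2 hroot, hmean ▸ hlt⟩

-- The bound `-3` is optimal: at the point `μ = -3`, `t = -4` of the parabola both sides are
-- `4 / 5`, and on the parabola the inequality is reversed for slightly larger `μ`.
theorem harmonic_mean_lt_apply_neg_one (hμ : μ ≤ -3) (ht : t < 0)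
    (hpar : 0 < t ^ 2 / 4 + μ - 1) :
    4 * (1 - μ) / (t * (μ - 2)) < paramMap μ t (-1) := by
  have hμ_sq : 9 ≤ μ ^ 2 := by nlinarith
  have ht_sq : 4 * (1 - μ) < t ^ 2 := by linarith
  have ht_lt : t < -4 := by nlinarith
  have hprod : 0 < t * (μ - 2) := mul_pos_of_neg_of_neg ht (by linarith)
  have hfactor : 0 ≤ (μ + 3) * (μ - 1) :=
    mul_nonneg_of_nonpos_of_nonpos (by linarith) (by linarith)
  rw [neg_one, div_lt_div_iff₀ hprod (by positivity), ← sub_pos]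
  calc
    0 ≤ 4 * (1 - μ) * (μ ^ 2 - 9) := mul_nonneg (by linarith) (by linarith)
    _ = (2 * μ ^ 2 - 5) * (4 * (1 - μ)) - 4 * (1 - μ) * (μ ^ 2 + 4) := by ring
    _ < (2 * μ ^ 2 - 5) * t ^ 2 - 4 * (1 - μ) * (μ ^ 2 + 4) := by
      gcongr
      linarith
    _ ≤ (2 * μ ^ 2 - 5) * t ^ 2 - 4 * (1 - μ) * (μ ^ 2 + 4)
          + t * (t + 4) + 4 * ((μ + 3) * (μ - 1)) * -t := by
      have hquadratic : 0 ≤ t * (t + 4) := mul_nonneg_of_nonpos_of_nonpos ht.le (by linarith)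
      have hlinear : 0 ≤ 4 * ((μ + 3) * (μ - 1)) * -t := mul_nonneg (by linarith) (by linarith)
      linarith
    _ = 2 * μ * (t - 2) * (t * (μ - 2)) - 4 * (1 - μ) * (μ ^ 2 + (t - 2) ^ 2) := by ring

end paramMap

theorem positive_fixed_point_below_image_general {μ t : ℝ} (hμ : μ ≤ -3) (ht : t < 0)
    (hpar : 0 < t ^ 2 / 4 + μ - 1) :
    ∃ c, 0 < c ∧ IsFixedPt (paramMap μ t) c ∧ c < paramMap μ t (-1) ∧
      paramMap μ t (-1) = 2 * μ * (t - 2) / (μ ^ 2 + (t - 2) ^ 2) := by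
  obtain ⟨c, hc, hfix, hlt⟩ :=
    paramMap.exists_pos_isFixedPt_lt_harmonic_mean (by linarith) (by linarith) ht hpar
  have himage := paramMap.harmonic_mean_lt_apply_neg_one hμ ht hpar
  exact ⟨c, hc, hfix, hlt.trans himage, paramMap.neg_one μ t⟩

/-- Observation 4.i, key inequality: for `μ < −4`, `t < 0` outside the parabola, the map
`f_{μ,t}` has a positive fixed point `c` with `c < f_{μ,t}(−1) = 2μ(t−2)/(μ²+(t−2)²)`. -/
theorem positive_fixed_point_below_image (μ t : ℝ) (hμ : μ < -4) (ht : t < 0)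
    (hpar : 0 < t ^ 2 / 4 + μ - 1) :
    let f : ℝ → ℝ := fun x => 2 * μ * x * (t * x + 2) / (μ ^ 2 * x ^ 2 + (t * x + 2) ^ 2)
    ∃ c : ℝ, 0 < c ∧ f c = c ∧ c < f (-1) ∧
      f (-1) = 2 * μ * (t - 2) / (μ ^ 2 + (t - 2) ^ 2) :=
  positive_fixed_point_below_image_general (by linarith) ht hpar
end

section
/- For real parameters μ ≠ 0 and t, define f_{μ,t} : ℝ → ℝ by f_{μ,t}(x) = 2μx(tx+2)/(μ²x² + (tx+2)²). If c ≠ 0 is a fixed point of f_{μ,t} (i.e., f_{μ,t}(c) = c), then tc + 2 ≠ 0 and the derivative of f_{μ,t} at c equals 2/μ − 2/(tc+2). If moreover μ > 2, t > 0, and c > 0, then |f_{μ,t}'(c)| < 1, i.e., c is an attracting fixed point. -/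
/-!
Write `s = t * c + 2`. At a fixed point `c ≠ 0` the equation `f c = c` cancels to
`μ ^ 2 * c ^ 2 + s ^ 2 = 2 * μ * s`. Inserting this into
`f' x = 4 * μ * ((t * x + 2) ^ 2 - μ ^ 2 * x ^ 2) / (μ ^ 2 * x ^ 2 + (t * x + 2) ^ 2) ^ 2` gives
the multiplier `2 / μ - 2 / s`. Dividing the same equation by `(μ * s) ^ 2` shows that the square
of the multiplier is `4 * (1 - c ^ 2) / s ^ 2`, so `c` is attracting exactly when
`4 * |1 - c ^ 2| < s ^ 2`. Since `|f| ≤ 1`, this holds as soon as `s ≥ 2`.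
-/

open Function

/-- The map `f_{μ,t}` of the paper, over an arbitrary field. Where the denominator vanishes, the
value is `0`, so a nonzero fixed point is never such a point. -/
def twoParamMap {K : Type*} [Field K] (μ t x : K) : K :=
  2 * μ * x * (t * x + 2) / (μ ^ 2 * x ^ 2 + (t * x + 2) ^ 2)

namespace twoParamMap

section Field

variable {K : Type*} [Field K] {μ t c : K}

theorem denom_ne_zero_of_isFixedPt (hc : c ≠ 0) (hfix : IsFixedPt (twoParamMap μ t) c) :
    μ ^ 2 * c ^ 2 + (t * c + 2) ^ 2 ≠ 0 := fun hD =>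
  hc (by rw [← hfix.eq, twoParamMap, hD, div_zero])

theorem denom_eq_of_isFixedPt (hc : c ≠ 0) (hfix : IsFixedPt (twoParamMap μ t) c) :
    μ ^ 2 * c ^ 2 + (t * c + 2) ^ 2 = 2 * μ * (t * c + 2) := by
  have hmul : 2 * μ * c * (t * c + 2) = c * (μ ^ 2 * c ^ 2 + (t * c + 2) ^ 2) :=
    (div_eq_iff (denom_ne_zero_of_isFixedPt hc hfix)).mp hfix
  apply mul_left_cancel₀ hc
  linear_combination -hmul

theorem two_mul_mul_ne_zero_of_isFixedPt (hc : c ≠ 0) (hfix : IsFixedPt (twoParamMap μ t) c) :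
    2 * μ * (t * c + 2) ≠ 0 :=
  denom_eq_of_isFixedPt hc hfix ▸ denom_ne_zero_of_isFixedPt hc hfix

theorem param_ne_zero_of_isFixedPt (hc : c ≠ 0) (hfix : IsFixedPt (twoParamMap μ t) c) : μ ≠ 0 :=
  right_ne_zero_of_mul (left_ne_zero_of_mul (two_mul_mul_ne_zero_of_isFixedPt hc hfix))

theorem mul_add_two_ne_zero_of_isFixedPt (hc : c ≠ 0) (hfix : IsFixedPt (twoParamMap μ t) c) :
    t * c + 2 ≠ 0 :=
  right_ne_zero_of_mul (two_mul_mul_ne_zero_of_isFixedPt hc hfix)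

theorem multiplier_sq (hc : c ≠ 0) (hfix : IsFixedPt (twoParamMap μ t) c) :
    (2 / μ - 2 / (t * c + 2)) ^ 2 = 4 * (1 - c ^ 2) / (t * c + 2) ^ 2 := by
  have hμ := param_ne_zero_of_isFixedPt hc hfix
  have hs := mul_add_two_ne_zero_of_isFixedPt hc hfix
  have hD := denom_eq_of_isFixedPt hc hfix
  generalize t * c + 2 = s at hs hD ⊢
  field_simp
  linear_combination 4 * hD

end Field

theorem abs_le_one {K : Type*} [Field K] [LinearOrder K] [IsStrictOrderedRing K] (μ t x : K) :
    |twoParamMap μ t x| ≤ 1 := by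
  have hD : 0 ≤ μ ^ 2 * x ^ 2 + (t * x + 2) ^ 2 := by positivity
  rw [twoParamMap, abs_div, abs_of_nonneg hD]
  refine div_le_one_of_le₀ (abs_le.mpr ⟨?_, ?_⟩) hD
  · linear_combination sq_nonneg (μ * x + (t * x + 2))
  · linear_combination sq_nonneg (μ * x - (t * x + 2))

theorem abs_four_mul_one_sub_sq_lt_of_isFixedPt {K : Type*} [Field K] [LinearOrder K]
    [IsStrictOrderedRing K] {μ t c : K} (hc : c ≠ 0) (hfix : IsFixedPt (twoParamMap μ t) c)
    (htc : 0 ≤ t * c) : |4 * (1 - c ^ 2)| < (t * c + 2) ^ 2 := by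
  have hc_le : c ^ 2 ≤ 1 := (sq_le_one_iff_abs_le_one c).mpr (hfix.eq ▸ abs_le_one μ t c)
  calc |4 * (1 - c ^ 2)| = 4 * (1 - c ^ 2) := abs_of_nonneg (by linarith)
    _ < 2 ^ 2 := by linarith [sq_pos_iff.mpr hc]
    _ ≤ (t * c + 2) ^ 2 := by gcongr; linarith

theorem norm_multiplier_lt_one_iff {K : Type*} [NormedField K] {μ t c : K} (hc : c ≠ 0)
    (hfix : IsFixedPt (twoParamMap μ t) c) :
    ‖2 / μ - 2 / (t * c + 2)‖ < 1 ↔ ‖4 * (1 - c ^ 2)‖ < ‖t * c + 2‖ ^ 2 := by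
  have hs : 0 < ‖t * c + 2‖ ^ 2 :=
    pow_pos (norm_pos_iff.mpr (mul_add_two_ne_zero_of_isFixedPt hc hfix)) 2
  rw [← sq_lt_one_iff₀ (norm_nonneg _), ← norm_pow, multiplier_sq hc hfix, norm_div, norm_pow,
    div_lt_one hs]

section Deriv

variable {𝕜 : Type*} [NontriviallyNormedField 𝕜] {μ t x c : 𝕜}

protected theorem hasDerivAt (hD : μ ^ 2 * x ^ 2 + (t * x + 2) ^ 2 ≠ 0) :
    HasDerivAt (twoParamMap μ t)
      (4 * μ * ((t * x + 2) ^ 2 - μ ^ 2 * x ^ 2) / (μ ^ 2 * x ^ 2 + (t * x + 2) ^ 2) ^ 2) x := by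
  have hlin : HasDerivAt (fun y => t * y + 2) t x := by
    simpa using ((hasDerivAt_id x).const_mul t).add_const 2
  have hnum : HasDerivAt (fun y => 2 * μ * y * (t * y + 2))
      (2 * μ * (t * x + 2) + 2 * μ * x * t) x := by
    simpa using ((hasDerivAt_id x).const_mul (2 * μ)).fun_mul hlin
  have hden : HasDerivAt (fun y => μ ^ 2 * y ^ 2 + (t * y + 2) ^ 2)
      (μ ^ 2 * (2 * x) + 2 * (t * x + 2) * t) x := by
    simpa using ((hasDerivAt_pow 2 x).const_mul (μ ^ 2)).fun_add (hlin.fun_pow 2)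
  refine (hnum.fun_div hden hD).congr_deriv ?_
  congr 1
  ring

theorem hasDerivAt_of_isFixedPt (hc : c ≠ 0) (hfix : IsFixedPt (twoParamMap μ t) c) :
    HasDerivAt (twoParamMap μ t) (2 / μ - 2 / (t * c + 2)) c := by
  have hμ := param_ne_zero_of_isFixedPt hc hfix
  have hs := mul_add_two_ne_zero_of_isFixedPt hc hfix
  have hD := denom_eq_of_isFixedPt hc hfix
  have htwo : (2 : 𝕜) ≠ 0 :=
    left_ne_zero_of_mul (left_ne_zero_of_mul (two_mul_mul_ne_zero_of_isFixedPt hc hfix))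
  refine (twoParamMap.hasDerivAt (denom_ne_zero_of_isFixedPt hc hfix)).congr_deriv ?_
  rw [hD]
  generalize t * c + 2 = s at hs hD ⊢
  field_simp
  linear_combination -4 * hD

end Deriv

end twoParamMap

theorem multiplier_formula_at_fixed_point_general {𝕜 : Type*} [NontriviallyNormedField 𝕜]
    {μ t c : 𝕜} (hc : c ≠ 0) (hfix : IsFixedPt (twoParamMap μ t) c) :
    t * c + 2 ≠ 0 ∧
    deriv (twoParamMap μ t) c = 2 / μ - 2 / (t * c + 2) ∧
    (‖deriv (twoParamMap μ t) c‖ < 1 ↔ ‖4 * (1 - c ^ 2)‖ < ‖t * c + 2‖ ^ 2) := by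
  have hderiv := (twoParamMap.hasDerivAt_of_isFixedPt hc hfix).deriv
  refine ⟨twoParamMap.mul_add_two_ne_zero_of_isFixedPt hc hfix, hderiv, ?_⟩
  rw [hderiv, twoParamMap.norm_multiplier_lt_one_iff hc hfix]

/-- The multiplier formula of observation 4.j: at a nonzero fixed point `c` of `f_{μ,t}`
one has `f_{μ,t}'(c) = 2/μ − 2/(tc+2)`; and for `μ > 2`, `t > 0`, `c > 0` the fixed point
is attracting. -/
theorem multiplier_formula_at_fixed_point (μ t : ℝ) (hμ : μ ≠ 0) (c : ℝ) (hc : c ≠ 0)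
    (hfix : 2 * μ * c * (t * c + 2) / (μ ^ 2 * c ^ 2 + (t * c + 2) ^ 2) = c) :
    t * c + 2 ≠ 0 ∧
    deriv (fun x : ℝ => 2 * μ * x * (t * x + 2) / (μ ^ 2 * x ^ 2 + (t * x + 2) ^ 2)) c
      = 2 / μ - 2 / (t * c + 2) ∧
    (2 < μ → 0 < t → 0 < c →
      |deriv (fun x : ℝ => 2 * μ * x * (t * x + 2) / (μ ^ 2 * x ^ 2 + (t * x + 2) ^ 2)) c|
        < 1) := by
  obtain ⟨hs, hderiv, hattr⟩ := multiplier_formula_at_fixed_point_general hc hfix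
  refine ⟨hs, hderiv, fun _ ht hc_pos => hattr.mpr ?_⟩
  simpa only [Real.norm_eq_abs, sq_abs] using
    twoParamMap.abs_four_mul_one_sub_sq_lt_of_isFixedPt hc hfix (mul_pos ht hc_pos).le
end

section
/- For real parameters μ > 2 and t > 0, define f_{μ,t} : ℝ → ℝ by f_{μ,t}(x) = 2μx(tx+2)/(μ²x² + (tx+2)²). Then f_{μ,t} has exactly one positive fixed point c (there exists a unique c > 0 with f_{μ,t}(c) = c), the interval (0,∞) is invariant under f_{μ,t}, and for every x > 0 the iterates f_{μ,t}^[n](x) converge to c as n → ∞. -/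
open Filter

/-!
Writing `u = μx / (tx + 2)`, the map is `f x = 2u / (1 + u²)`. Swapping the two factors turns `f`
into the map `φ u = μu / (1 + tu + u²)`, whose positive fixed point `c` is the root of
`1 + tc + c² = μ`. The quantity `V u = (u - c)² / u`, which is invariant under `u ↦ c² / u` and
thus measures `|log (u / c)|`, satisfies
`V (φ u) = (1 - cu)² / ((1 + tc + c²) (1 + tu + u²)) * V u`, and the factor is at most
`max 1 c² / (1 + c²) < 1`. So the orbits of `φ` converge to `c`, and those of `f` to
`2c / (1 + c²)`.
-/

open Function Set Topology

section RelSqDist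

/-- The squared distance from `u` to `c` relative to `u`, used as a Lyapunov function on `(0, ∞)`.
It is not symmetric in `c` and `u`. -/
noncomputable def relSqDist (c u : ℝ) : ℝ := (u - c) ^ 2 / u

lemma relSqDist_nonneg (c : ℝ) {u : ℝ} (hu : 0 < u) : 0 ≤ relSqDist c u := by
  unfold relSqDist
  positivity

lemma sq_sub_le_relSqDist_mul (c : ℝ) {u : ℝ} (hu : 0 < u) :
    (u - c) ^ 2 ≤ relSqDist c u * (relSqDist c u + 2 * c) := by
  have hsq : (u - c) ^ 2 = relSqDist c u * u := (div_mul_cancel₀ _ hu.ne').symm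
  have hsum : relSqDist c u + 2 * c = u + c ^ 2 / u := by
    unfold relSqDist
    field_simp
    ring
  have hle : u ≤ relSqDist c u + 2 * c := by
    rw [hsum]
    exact le_add_of_nonneg_right (by positivity)
  rw [hsq]
  exact mul_le_mul_of_nonneg_left hle (relSqDist_nonneg c hu)

lemma tendsto_of_tendsto_relSqDist_zero {ι : Type*} {l : Filter ι} {c : ℝ} {u : ι → ℝ}
    (hpos : ∀ i, 0 < u i) (hu : Tendsto (fun i => relSqDist c (u i)) l (𝓝 0)) :
    Tendsto u l (𝓝 c) := by
  have hbound : Tendsto (fun i => relSqDist c (u i) * (relSqDist c (u i) + 2 * c)) l (𝓝 0) := by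
    simpa using hu.mul (hu.add_const (2 * c))
  have hsq : Tendsto (fun i => (u i - c) ^ 2) l (𝓝 0) :=
    squeeze_zero (fun i => sq_nonneg _) (fun i => sq_sub_le_relSqDist_mul c (hpos i)) hbound
  rw [tendsto_iff_dist_tendsto_zero]
  simpa [Real.dist_eq, Real.sqrt_sq_eq_abs] using hsq.sqrt

lemma tendsto_iterate_of_relSqDist_le {φ : ℝ → ℝ} {c k u : ℝ} (hk₀ : 0 ≤ k) (hk₁ : k < 1)
    (hφ : MapsTo φ (Ioi 0) (Ioi 0))
    (hcontr : ∀ v, 0 < v → relSqDist c (φ v) ≤ k * relSqDist c v) (hu : 0 < u) :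
    Tendsto (fun n => φ^[n] u) atTop (𝓝 c) := by
  have hpos (n : ℕ) : 0 < φ^[n] u := hφ.iterate n hu
  have hgeom (n : ℕ) : relSqDist c (φ^[n] u) ≤ k ^ n * relSqDist c u :=
    le_geom (u := fun n => relSqDist c (φ^[n] u)) hk₀ n fun m _ => by
      simpa only [iterate_succ_apply'] using hcontr _ (hpos m)
  have hlim : Tendsto (fun n : ℕ => k ^ n * relSqDist c u) atTop (𝓝 0) := by
    simpa using (tendsto_pow_atTop_nhds_zero_of_lt_one hk₀ hk₁).mul_const (relSqDist c u)
  exact tendsto_of_tendsto_relSqDist_zero hpos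
    (squeeze_zero (fun n => relSqDist_nonneg c (hpos n)) hgeom hlim)

end RelSqDist

section ReducedMap

/-- The map `φ_{μ,t}` obtained from `f_{μ,t}` by passing to the coordinate `μx / (tx + 2)`. -/
noncomputable def reducedMap (μ t u : ℝ) : ℝ := μ * u / (1 + t * u + u ^ 2)

lemma exists_pos_one_add_mul_add_sq_eq {μ : ℝ} (hμ : 1 < μ) (t : ℝ) :
    ∃ c : ℝ, 0 < c ∧ 1 + t * c + c ^ 2 = μ := by
  have hsq : √(t ^ 2 + 4 * (μ - 1)) ^ 2 = t ^ 2 + 4 * (μ - 1) :=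
    Real.sq_sqrt (by linarith [sq_nonneg t])
  have hlt : t < √(t ^ 2 + 4 * (μ - 1)) := Real.lt_sqrt_of_sq_lt (by linarith)
  exact ⟨(√(t ^ 2 + 4 * (μ - 1)) - t) / 2, by linarith, by linarith⟩

lemma max_one_sq_div_one_add_sq_lt_one {c : ℝ} (hc : c ≠ 0) : max 1 (c ^ 2) / (1 + c ^ 2) < 1 := by
  have hc₂ : 0 < c ^ 2 := by positivity
  rw [div_lt_one (by positivity)]
  exact max_lt (by linarith) (by linarith)

lemma sq_one_sub_mul_le {c u : ℝ} (h : 0 ≤ c * u) :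
    (1 - c * u) ^ 2 ≤ max 1 (c ^ 2) * (1 + u ^ 2) :=
  calc (1 - c * u) ^ 2 ≤ 1 + c ^ 2 * u ^ 2 := by linarith
    _ ≤ max 1 (c ^ 2) + max 1 (c ^ 2) * u ^ 2 := by
      gcongr
      · exact le_max_left _ _
      · exact le_max_right _ _
    _ = max 1 (c ^ 2) * (1 + u ^ 2) := by ring

variable {μ t c u : ℝ}

lemma reducedMap_pos (hμ : 0 < μ) (ht : 0 ≤ t) (hu : 0 < u) : 0 < reducedMap μ t u := by
  unfold reducedMap
  positivity

lemma isFixedPt_reducedMap (hμ : μ ≠ 0) (h : 1 + t * c + c ^ 2 = μ) :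
    IsFixedPt (reducedMap μ t) c := by
  rw [IsFixedPt, reducedMap, h, mul_div_cancel_left₀ c hμ]

lemma relSqDist_reducedMap (hμ : μ ≠ 0) (h : 1 + t * c + c ^ 2 = μ)
    (hu : u ≠ 0) (hq : 1 + t * u + u ^ 2 ≠ 0) :
    relSqDist c (reducedMap μ t u) =
      (1 - c * u) ^ 2 / (μ * (1 + t * u + u ^ 2)) * relSqDist c u := by
  have hsub : μ * u - c * (1 + t * u + u ^ 2) = (1 - c * u) * (u - c) := by
    rw [← h]
    ring
  have hdiff : reducedMap μ t u - c = (1 - c * u) * (u - c) / (1 + t * u + u ^ 2) := by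
    rw [reducedMap, ← hsub, sub_div, mul_div_cancel_right₀ c hq]
  rw [relSqDist, hdiff, reducedMap, relSqDist]
  field_simp

lemma relSqDist_reducedMap_le (ht : 0 ≤ t) (hc : 0 < c) (h : 1 + t * c + c ^ 2 = μ)
    (hu : 0 < u) :
    relSqDist c (reducedMap μ t u) ≤ max 1 (c ^ 2) / (1 + c ^ 2) * relSqDist c u := by
  have hμ : 1 + c ^ 2 ≤ μ := by linarith [mul_nonneg ht hc.le]
  have hq : 1 + u ^ 2 ≤ 1 + t * u + u ^ 2 := by linarith [mul_nonneg ht hu.le]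
  have hμ₀ : 0 < μ := lt_of_lt_of_le (by positivity) hμ
  have hfactor : (1 - c * u) ^ 2 / (μ * (1 + t * u + u ^ 2)) ≤ max 1 (c ^ 2) / (1 + c ^ 2) :=
    calc (1 - c * u) ^ 2 / (μ * (1 + t * u + u ^ 2))
        ≤ max 1 (c ^ 2) * (1 + u ^ 2) / ((1 + c ^ 2) * (1 + u ^ 2)) := by
          gcongr
          exact sq_one_sub_mul_le (by positivity)
      _ = max 1 (c ^ 2) / (1 + c ^ 2) := mul_div_mul_right _ _ (by positivity)
  rw [relSqDist_reducedMap hμ₀.ne' h hu.ne' (by positivity)]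
  exact mul_le_mul_of_nonneg_right hfactor (relSqDist_nonneg c hu)

lemma tendsto_iterate_reducedMap (ht : 0 ≤ t) (hc : 0 < c) (h : 1 + t * c + c ^ 2 = μ)
    (hu : 0 < u) : Tendsto (fun n => (reducedMap μ t)^[n] u) atTop (𝓝 c) :=
  have hμ : 0 < μ := h ▸ by positivity
  tendsto_iterate_of_relSqDist_le (by positivity) (max_one_sq_div_one_add_sq_lt_one hc.ne')
    (fun _ hv => reducedMap_pos hμ ht hv) (fun _ hv => relSqDist_reducedMap_le ht hc h hv) hu

end ReducedMap

section RationalMap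

/-- The map `f_{μ,t}`, whose orbits in `(0, ∞)` are studied. -/
noncomputable def rationalMap (μ t x : ℝ) : ℝ :=
  2 * μ * x * (t * x + 2) / (μ ^ 2 * x ^ 2 + (t * x + 2) ^ 2)

/-- The coordinate `u = μx / (tx + 2)`, which is the tangent of an angle `θ` such that
`f_{μ,t} x = sin (2θ)`. -/
noncomputable def tangentCoord (μ t x : ℝ) : ℝ := μ * x / (t * x + 2)

/-- `sin (2θ)` as a rational function of `u = tan θ`. -/
noncomputable def doubleAngleSin (u : ℝ) : ℝ := 2 * u / (1 + u ^ 2)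

lemma doubleAngleSin_pos {u : ℝ} (hu : 0 < u) : 0 < doubleAngleSin u := by
  unfold doubleAngleSin
  positivity

lemma continuous_doubleAngleSin : Continuous doubleAngleSin := by
  unfold doubleAngleSin
  exact Continuous.div (by fun_prop) (by fun_prop) fun u => by positivity

-- At the pole `tx + 2 = 0` of `tangentCoord`, both sides are `0` because `x / 0 = 0`.
lemma doubleAngleSin_tangentCoord (μ t x : ℝ) :
    doubleAngleSin (tangentCoord μ t x) = rationalMap μ t x := by
  unfold doubleAngleSin tangentCoord rationalMap
  rcases eq_or_ne (t * x + 2) 0 with hpole | hpole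
  · simp [hpole]
  · generalize t * x + 2 = s at hpole ⊢
    field_simp
    ring

lemma tangentCoord_doubleAngleSin (μ t u : ℝ) :
    tangentCoord μ t (doubleAngleSin u) = reducedMap μ t u := by
  have hu : 1 + u ^ 2 ≠ 0 := by positivity
  have hden : t * doubleAngleSin u + 2 = 2 / (1 + u ^ 2) * (1 + t * u + u ^ 2) := by
    unfold doubleAngleSin
    field_simp
    ring
  have hnum : μ * doubleAngleSin u = 2 / (1 + u ^ 2) * (μ * u) := by
    unfold doubleAngleSin
    ring
  rw [tangentCoord, hnum, hden, mul_div_mul_left _ _ (by positivity), reducedMap]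

lemma semiconj_doubleAngleSin (μ t : ℝ) :
    Semiconj doubleAngleSin (reducedMap μ t) (rationalMap μ t) := fun u => by
  rw [← tangentCoord_doubleAngleSin, doubleAngleSin_tangentCoord]

lemma iterate_succ_rationalMap (μ t x : ℝ) (n : ℕ) :
    (rationalMap μ t)^[n + 1] x = doubleAngleSin ((reducedMap μ t)^[n] (tangentCoord μ t x)) := by
  rw [iterate_succ_apply, ← doubleAngleSin_tangentCoord,
    ((semiconj_doubleAngleSin μ t).iterate_right n).eq]

variable {μ t : ℝ}

lemma tangentCoord_pos (hμ : 0 < μ) (ht : 0 ≤ t) {x : ℝ} (hx : 0 < x) :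
    0 < tangentCoord μ t x := by
  unfold tangentCoord
  positivity

lemma rationalMap_pos (hμ : 0 < μ) (ht : 0 ≤ t) {x : ℝ} (hx : 0 < x) : 0 < rationalMap μ t x :=
  doubleAngleSin_tangentCoord μ t x ▸ doubleAngleSin_pos (tangentCoord_pos hμ ht hx)

lemma tendsto_iterate_rationalMap {c x : ℝ} (ht : 0 ≤ t) (hc : 0 < c)
    (h : 1 + t * c + c ^ 2 = μ) (hx : 0 < x) :
    Tendsto (fun n => (rationalMap μ t)^[n] x) atTop (𝓝 (doubleAngleSin c)) := by
  have hμ : 0 < μ := h ▸ by positivity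
  rw [← tendsto_add_atTop_iff_nat 1]
  simp only [iterate_succ_rationalMap]
  exact (continuous_doubleAngleSin.tendsto c).comp
    (tendsto_iterate_reducedMap ht hc h (tangentCoord_pos hμ ht hx))

end RationalMap

theorem positive_orbits_converge_general (μ t : ℝ) (hμ : 1 < μ) (ht : 0 ≤ t) :
    ∃ c : ℝ, 0 < c ∧ rationalMap μ t c = c ∧
      (∀ c' : ℝ, 0 < c' → rationalMap μ t c' = c' → c' = c) ∧
      (∀ x : ℝ, 0 < x → 0 < rationalMap μ t x) ∧
      (∀ x : ℝ, 0 < x → Tendsto (fun n => (rationalMap μ t)^[n] x) atTop (𝓝 c)) := by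
  have hμ₀ : 0 < μ := one_pos.trans hμ
  obtain ⟨c, hc, h⟩ := exists_pos_one_add_mul_add_sq_eq hμ t
  have hlim (x : ℝ) (hx : 0 < x) :
      Tendsto (fun n => (rationalMap μ t)^[n] x) atTop (𝓝 (doubleAngleSin c)) :=
    tendsto_iterate_rationalMap ht hc h hx
  have hfix : IsFixedPt (rationalMap μ t) (doubleAngleSin c) :=
    (isFixedPt_reducedMap hμ₀.ne' h).map (semiconj_doubleAngleSin μ t)
  refine ⟨doubleAngleSin c, doubleAngleSin_pos hc, hfix, fun c' hc' hfix' => ?_,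
    fun x hx => rationalMap_pos hμ₀ ht hx, hlim⟩
  have hconst : Tendsto (fun _ : ℕ => c') atTop (𝓝 (doubleAngleSin c)) := by
    simpa only [iterate_fixed hfix'] using hlim c' hc'
  exact tendsto_nhds_unique tendsto_const_nhds hconst

/-- Observation 4.j: for `μ > 2` and `t > 0`, the map `f_{μ,t}` has a unique positive
fixed point `c`, preserves `(0,∞)`, and every orbit starting in `(0,∞)` converges to `c`. -/
theorem positive_orbits_converge (μ t : ℝ) (hμ : 2 < μ) (ht : 0 < t) :
    let f : ℝ → ℝ := fun x => 2 * μ * x * (t * x + 2) / (μ ^ 2 * x ^ 2 + (t * x + 2) ^ 2)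
    ∃ c : ℝ, 0 < c ∧ f c = c ∧ (∀ c' : ℝ, 0 < c' → f c' = c' → c' = c) ∧
      (∀ x : ℝ, 0 < x → 0 < f x) ∧
      (∀ x : ℝ, 0 < x → Tendsto (fun n => f^[n] x) atTop (nhds c)) :=
  positive_orbits_converge_general μ t (one_lt_two.trans hμ) ht.le
end

section
/- Fix μ > 1 and define h_μ : ℝ → ℝ by h_μ(x) = (1/μ)(x + 1/x + 2) (with the convention 1/0 = 0). Let p = 1/(√μ − 1). Then p > 0, h_μ(p) = p, the interval (0,∞) is invariant under h_μ, and for every x > 0 the iterates h_μ^[n](x) converge to p as n → ∞. -/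
open Filter

/-!
Since `h(x) = (x + 1)² / (μ x)`, for `x > y > 0` the quotient `h(x) / h(y)` is
`((x + 1) / (y + 1))² · (y / x)`, and `1 < (x + 1) / (y + 1) < x / y` puts it strictly between
`y / x` and `x / y`. Hence `h` strictly decreases the distance `|log x - log y|` on `(0, ∞)`.
This metric space is isometric to `ℝ`, so it is proper, and Edelstein's theorem applies: the
distance from an orbit to the fixed point decreases to a limit, which every cluster point of the
orbit and the image of that cluster point both attain; so the fixed point is the only cluster point.
-/

open scoped Topology

section StrictContraction

lemma map_apply_eq_of_mapClusterPt_iterate {X Y : Type*} [TopologicalSpace X] [TopologicalSpace Y]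
    [T2Space Y] {f : X → X} {V : X → Y} {x y : X} {c : Y} (hf : ContinuousAt f y)
    (hVy : ContinuousAt V y) (hVfy : ContinuousAt V (f y))
    (hc : Tendsto (fun n => V (f^[n] x)) atTop (𝓝 c))
    (hy : MapClusterPt y atTop (fun n => f^[n] x)) : V (f y) = V y := by
  have hV : V y = c := eq_of_nhds_neBot ((hy.continuousAt_comp hVy).clusterPt.mono hc)
  have hc' : Tendsto (fun n => V (f (f^[n] x))) atTop (𝓝 c) := by
    simpa only [Function.iterate_succ_apply'] using (tendsto_add_atTop_iff_nat 1).2 hc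
  have hVf : V (f y) = c :=
    eq_of_nhds_neBot ((hy.continuousAt_comp (hVfy.comp hf)).clusterPt.mono hc')
  rw [hVf, hV]

variable {X : Type*} [MetricSpace X] [ProperSpace X] {f : X → X} {p : X}

theorem tendsto_iterate_of_dist_fixedPt_lt (hf : Continuous f) (hp : Function.IsFixedPt f p)
    (hlt : ∀ x, x ≠ p → dist (f x) p < dist x p) (x : X) :
    Tendsto (fun n => f^[n] x) atTop (𝓝 p) := by
  have hle (y : X) : dist (f y) p ≤ dist y p := by
    rcases eq_or_ne y p with rfl | hy
    · rw [hp.eq]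
    · exact (hlt y hy).le
  have hanti : Antitone fun n => dist (f^[n] x) p := antitone_nat_of_succ_le fun n => by
    simpa only [Function.iterate_succ_apply'] using hle (f^[n] x)
  have hlim := tendsto_atTop_ciInf hanti ⟨0, Set.forall_mem_range.2 fun _ => dist_nonneg⟩
  have horbit : ∀ᶠ n in atTop, f^[n] x ∈ Metric.closedBall p (dist x p) :=
    Eventually.of_forall fun n => hanti n.zero_le
  refine (isCompact_closedBall p (dist x p)).tendsto_nhds_of_unique_mapClusterPt horbit
    fun y _ hy => ?_
  have hdist : Continuous fun z => dist z p := continuous_id.dist continuous_const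
  have heq : dist (f y) p = dist y p := map_apply_eq_of_mapClusterPt_iterate
    hf.continuousAt hdist.continuousAt hdist.continuousAt hlim hy
  by_contra hne
  exact (hlt y hne).ne heq

theorem tendsto_iterate_of_dist_map_lt (hf : ∀ x y, x ≠ y → dist (f x) (f y) < dist x y)
    (hp : Function.IsFixedPt f p) (x : X) : Tendsto (fun n => f^[n] x) atTop (𝓝 p) := by
  have hlip : LipschitzWith 1 f := LipschitzWith.mk_one fun x y => by
    rcases eq_or_ne x y with rfl | hxy
    · simp
    · exact (hf x y hxy).le
  refine tendsto_iterate_of_dist_fixedPt_lt hlip.continuous hp (fun y hy => ?_) x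
  simpa only [hp.eq] using hf y p hy

end StrictContraction

theorem tendsto_iterate_of_abs_log_sub_log_lt {f : ℝ → ℝ} (hpos : ∀ x, 0 < x → 0 < f x)
    (hlt : ∀ x y, 0 < x → 0 < y → x ≠ y →
      |Real.log (f x) - Real.log (f y)| < |Real.log x - Real.log y|)
    {p : ℝ} (hp : 0 < p) (hfix : Function.IsFixedPt f p) {x : ℝ} (hx : 0 < x) :
    Tendsto (fun n => f^[n] x) atTop (𝓝 p) := by
  let F : ℝ → ℝ := fun u => Real.log (f (Real.exp u))
  have hconj : Function.Semiconj Real.exp F f := fun u => Real.exp_log (hpos _ (Real.exp_pos u))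
  have hF (u v : ℝ) (huv : u ≠ v) : dist (F u) (F v) < dist u v := by
    simpa only [Real.dist_eq, F, Real.log_exp] using
      hlt _ _ (Real.exp_pos u) (Real.exp_pos v) (Real.exp_injective.ne huv)
  have hFfix : Function.IsFixedPt F (Real.log p) := by
    simp only [Function.IsFixedPt, F, Real.exp_log hp, hfix.eq]
  have hlim := (Real.continuous_exp.tendsto _).comp
    (tendsto_iterate_of_dist_map_lt hF hFfix (Real.log x))
  rw [Real.exp_log hp] at hlim
  refine hlim.congr fun n => ?_
  rw [Function.comp_apply, hconj.iterate_right n, Real.exp_log hx]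

lemma log_add_sub_log_add_lt {a x y : ℝ} (ha : 0 < a) (hy : 0 < y) (hyx : y < x) :
    Real.log (x + a) - Real.log (y + a) < Real.log x - Real.log y := by
  have hx : 0 < x := hy.trans hyx
  rw [← Real.log_div (by positivity) (by positivity), ← Real.log_div hx.ne' hy.ne']
  apply Real.log_lt_log (by positivity)
  rw [div_lt_div_iff₀ (by positivity) hy]
  linarith [mul_lt_mul_of_pos_left hyx ha]

/-- The map `x ↦ (1/μ)(x + 1/x + 2)` of the real line, in the paper a member of the post-critical
curve `f∘f∘f(c) = f∘f(c)`. The pole `0` is sent to `2/μ` because `1 / 0 = 0`. -/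
noncomputable def postcriticalMap (μ x : ℝ) : ℝ :=
  (1 / μ) * (x + 1 / x + 2)

namespace postcriticalMap

lemma eq_sq_div (μ : ℝ) {x : ℝ} (hx : x ≠ 0) : postcriticalMap μ x = (x + 1) ^ 2 / (μ * x) := by
  have hsq : x + 1 / x + 2 = (x + 1) ^ 2 / x := by
    field_simp
    ring
  rw [postcriticalMap, hsq, div_mul_div_comm, one_mul]

variable {μ : ℝ}

lemma pos (hμ : 0 < μ) {x : ℝ} (hx : 0 < x) : 0 < postcriticalMap μ x := by
  unfold postcriticalMap
  positivity

lemma isFixedPt (hμ : 1 < μ) :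
    Function.IsFixedPt (postcriticalMap μ) (1 / (Real.sqrt μ - 1)) := by
  have hsqrt : Real.sqrt μ - 1 ≠ 0 := (sub_pos.2 (Real.lt_sqrt_of_sq_lt (by rwa [one_pow]))).ne'
  have hsq : Real.sqrt μ ^ 2 = μ := Real.sq_sqrt (by positivity)
  rw [Function.IsFixedPt, postcriticalMap]
  field_simp
  linear_combination hsq

lemma log_apply (hμ : μ ≠ 0) {x : ℝ} (hx : 0 < x) :
    Real.log (postcriticalMap μ x) = 2 * Real.log (x + 1) - Real.log x - Real.log μ := by
  rw [eq_sq_div μ hx.ne', Real.log_div (by positivity) (by positivity), Real.log_pow,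
    Real.log_mul hμ hx.ne']
  push_cast
  ring

lemma abs_log_sub_log_lt (hμ : μ ≠ 0) {x y : ℝ} (hx : 0 < x) (hy : 0 < y) (hxy : x ≠ y) :
    |Real.log (postcriticalMap μ x) - Real.log (postcriticalMap μ y)| <
      |Real.log x - Real.log y| := by
  wlog hyx : y < x generalizing x y
  · rw [abs_sub_comm, abs_sub_comm (Real.log x)]
    exact this hy hx hxy.symm (hxy.lt_of_le (not_lt.1 hyx))
  have hlog : Real.log y < Real.log x := Real.log_lt_log hy hyx
  have hlog_add : Real.log (y + 1) < Real.log (x + 1) := Real.log_lt_log (by positivity) (by gcongr)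
  have hshift : Real.log (x + 1) - Real.log (y + 1) < Real.log x - Real.log y :=
    log_add_sub_log_add_lt one_pos hy hyx
  rw [log_apply hμ hx, log_apply hμ hy, abs_of_pos (sub_pos.2 hlog), abs_lt]
  constructor <;> linarith

end postcriticalMap

/-- For `μ > 1`, the map `x ↦ (1/μ)(x + 1/x + 2)` has the attracting fixed point
`p = 1/(√μ − 1) > 0`, preserves `(0,∞)`, and every orbit starting in `(0,∞)` converges
to `p`. -/
theorem escape_boundary_orbits_converge (μ : ℝ) (hμ : 1 < μ) :
    let h : ℝ → ℝ := fun x => (1 / μ) * (x + 1 / x + 2)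
    let p : ℝ := 1 / (Real.sqrt μ - 1)
    0 < p ∧ h p = p ∧ (∀ x : ℝ, 0 < x → 0 < h x) ∧
      (∀ x : ℝ, 0 < x → Tendsto (fun n => h^[n] x) atTop (nhds p)) := by
  intro h p
  have hμ₀ : 0 < μ := one_pos.trans hμ
  have hp : 0 < p := one_div_pos.2 (sub_pos.2 (Real.lt_sqrt_of_sq_lt (by rwa [one_pow])))
  have hfix : Function.IsFixedPt h p := postcriticalMap.isFixedPt hμ
  have hpos (x : ℝ) (hx : 0 < x) : 0 < h x := postcriticalMap.pos hμ₀ hx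
  have hcontr (x y : ℝ) (hx : 0 < x) (hy : 0 < y) (hxy : x ≠ y) :
      |Real.log (h x) - Real.log (h y)| < |Real.log x - Real.log y| :=
    postcriticalMap.abs_log_sub_log_lt hμ₀.ne' hx hy hxy
  exact ⟨hp, hfix, hpos, fun x hx => tendsto_iterate_of_abs_log_sub_log_lt hpos hcontr hp hfix hx⟩
end
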